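/- arXiv:1909.10126 — 2 statements merged into one kernel-verified Lean document; each statement's English description precedes it below -/
import Mathlib

section
/- Let k ≥ 4 be an even integer and let G be a finite group of even order such that every prime power dividing |G| either divides k or is relatively prime to k(k − 1). Then there are infinitely many positive integers v for which there exists a 2-(v,k,1)-design whose automorphism group contains a subgroup isomorphic to G. -/
/-!
Write `e = |G|`, `k = 2h`, `m = k (k - 1)` and `M = e * h * m`. By Dirichlet there are arbitrarily
large primes `p = M * r + 1` with `r = 1 + e * h * t`; let `F = ZMod p`. The points of the design are
the vectors of `(G → F) × (Fin h → F)`, on which `G` acts linearly and faithfully by permuting the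
coordinates of the first factor. The blocks are all translates of a `G`-invariant difference family
(`IsDiffFamily`), so every element of `G` is an automorphism (`design_of_diffFamily`).

The difficulty is that an element of `G` may swap two points, and then fixes the block through them.
This dictates the special base blocks
`{(± z j * w • a, w • e j) : j < h}` with `w ∈ E` and `a ∈ R`, which are invariant under `a ↦ -a`.
Here `R` is a `G`-invariant set of vectors meeting every line of `G → F` in a coset of the group of
`e`-th roots of unity (`exists_reps`); it exists because an eigenvalue of an element of `G` is an
`e`-th root of unity. The vertical differences `± 2 z j w • a` of the special blocks cover all
nonzero vectors of `(G → F) × {0}` exactly once as soon as `z` and `E` tile `Fˣ` modulo the `e`-th roots of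
unity. Each remaining line through `0` is filled by a difference family in `F`: one for all of
`F \ {0}`, or, if the line already carries differences of special blocks, one for the complement of
`± E`. These requirements are collected in `CycloData`, and `isDiffFamily_baseBlocks` verifies that
they yield a difference family.

To produce the data, let `g` be a primitive root, so that `γ = g ^ r` has order `M`, and sort the
nonzero elements of `F` into cyclotomic classes by their `r`-th power. Take `E` to be the union of the
classes `γ ^ i`, `i < m`, and `2 z j` in the class `γ ^ (m * j)`; since `r ≡ 1` modulo `e * h`, this
is a tiling. The two difference families in `F` consist of the multiples of `k`-sets by the `r`-th
roots of unity, where the `k`-sets have prescribed classes of differences. Such sets exist in every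
sufficiently large field (`exists_embedding`), by a greedy argument resting on a second moment
estimate (`card_bad_le`): for each class, all but boundedly many points see a fair share of any given
dense set in that class.
-/

/-- A `2`-`(v,k,1)` design on a point type `α` (with `v` the cardinality of `α`):
a collection of `k`-element subsets (blocks) such that any two distinct points
lie in exactly one block. -/
structure Design (α : Type) [DecidableEq α] (k : ℕ) where
  blocks : Finset (Finset α)
  blockSize : ∀ B ∈ blocks, B.card = k
  pairCover : ∀ x y : α, x ≠ y → ∃! B, B ∈ blocks ∧ x ∈ B ∧ y ∈ B

/-- `g` is an automorphism of the design `D`: it permutes the point set and maps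
the collection of blocks onto itself. -/
def IsAuto {α : Type} [DecidableEq α] {k : ℕ} (D : Design α k)
    (g : Equiv.Perm α) : Prop :=
  ∀ B : Finset α, B ∈ D.blocks ↔ B.image g ∈ D.blocks


/-! ### Difference families and their designs -/

/-- `𝓕` is a family of `k`-subsets of an abelian group whose differences `x - y`, for `x ≠ y` in a
common member of `𝓕`, cover each element of `S` exactly once and nothing else. In `uniq`, the
equalities `A = A'` and `x = x'` imply `y = y'`. -/
structure IsDiffFamily {X : Type} [AddCommGroup X] (k : ℕ) (𝓕 : Set (Finset X)) (S : Set X) :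
    Prop where
  card : ∀ A ∈ 𝓕, A.card = k
  cover : ∀ d ∈ S, ∃ A ∈ 𝓕, ∃ x ∈ A, ∃ y ∈ A, x - y = d
  mem : ∀ A ∈ 𝓕, ∀ x ∈ A, ∀ y ∈ A, x ≠ y → x - y ∈ S
  uniq : ∀ A ∈ 𝓕, ∀ A' ∈ 𝓕, ∀ x ∈ A, ∀ y ∈ A, ∀ x' ∈ A', ∀ y' ∈ A', x ≠ y →
    x - y = x' - y' → A = A' ∧ x = x'

/-- The translates of a difference family for all nonzero differences are the blocks of a design, on
which every group of additive permutations preserving the family acts. -/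
theorem design_of_diffFamily {X G : Type} [AddCommGroup X] [Fintype X] [Group G] {k : ℕ}
    {𝓕 : Set (Finset X)} (h𝓕 : IsDiffFamily k 𝓕 {0}ᶜ) (ρ : G →* Equiv.Perm X)
    (hρ : Function.Injective ρ) (hadd : ∀ g x y, ρ g (x + y) = ρ g x + ρ g y)
    (hinv : ∀ g, ∀ A ∈ 𝓕, A.map (ρ g).toEmbedding ∈ 𝓕) :
    ∃ (D : Design (Fin (Fintype.card X)) k) (f : G →* Equiv.Perm (Fin (Fintype.card X))),
      Function.Injective f ∧ ∀ g : G, IsAuto D (f g) := by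
  classical
  set e := Fintype.equivFin X
  let bl : X → Finset X → Finset (Fin (Fintype.card X)) :=
    fun v A => A.image fun x => e (x + v)
  have hinj : ∀ v : X, Function.Injective fun x => e (x + v) := fun v x y h => by
    simpa using h
  have hmem : ∀ v A p, p ∈ bl v A ↔ e.symm p - v ∈ A := by
    intro v A p
    simp only [bl, Finset.mem_image]
    constructor
    · rintro ⟨x, hx, rfl⟩; simpa using hx
    · intro h; exact ⟨_, h, by simp⟩
  let D : Design (Fin (Fintype.card X)) k :=
    { blocks := Finset.univ.filter fun B => ∃ A ∈ 𝓕, ∃ v, B = bl v A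
      blockSize := by
        intro B hB
        obtain ⟨A, hA, v, rfl⟩ := (Finset.mem_filter.1 hB).2
        rw [Finset.card_image_of_injective _ (hinj v), h𝓕.card A hA]
      pairCover := by
        intro p q hpq
        have hne : e.symm p - e.symm q ≠ 0 := by
          rw [sub_ne_zero]; simpa using hpq
        obtain ⟨A, hA, x, hx, y, hy, hd⟩ := h𝓕.cover _ hne
        refine ⟨bl (e.symm p - x) A, ⟨?_, ?_, ?_⟩, ?_⟩
        · exact Finset.mem_filter.2 ⟨Finset.mem_univ _, A, hA, _, rfl⟩
        · rw [hmem]; simpa using hx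
        · rw [hmem]
          have : e.symm q - (e.symm p - x) = y := by
            rw [sub_eq_iff_eq_add] at hd; rw [hd]; abel
          rwa [this]
        · rintro B ⟨hB, hp, hq⟩
          obtain ⟨A', hA', v, rfl⟩ := (Finset.mem_filter.1 hB).2
          rw [hmem] at hp hq
          have := h𝓕.uniq A hA A' hA' x hx y hy _ hp _ hq
            (by rintro rfl; exact hne (by rw [← hd, sub_self])) (by rw [hd]; abel)
          obtain ⟨rfl, hx'⟩ := this
          rw [hx']; simp }
  have hfwd : ∀ g, ∀ B ∈ D.blocks, B.image (e.permCongrHom (ρ g)) ∈ D.blocks := by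
    intro g B hB
    obtain ⟨A, hA, v, rfl⟩ := (Finset.mem_filter.1 hB).2
    refine Finset.mem_filter.2 ⟨Finset.mem_univ _, _, hinv g A hA, ρ g v, ?_⟩
    ext p
    simp only [bl, Finset.mem_image, Finset.mem_map]
    constructor
    · rintro ⟨_, ⟨x, hx, rfl⟩, rfl⟩
      exact ⟨ρ g x, ⟨x, hx, rfl⟩, by simp [Equiv.permCongrHom, hadd]⟩
    · rintro ⟨_, ⟨x, hx, rfl⟩, rfl⟩
      exact ⟨_, ⟨x, hx, rfl⟩, by simp [Equiv.permCongrHom, hadd]⟩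
  refine ⟨D, e.permCongrHom.toMonoidHom.comp ρ, ?_, ?_⟩
  · exact (e.permCongrHom.injective).comp hρ
  · intro g B
    refine ⟨fun h => hfwd g B h, fun h => ?_⟩
    have := hfwd g⁻¹ _ h
    rw [Finset.image_image] at this
    convert this
    ext p
    simp

/-! ### The arithmetic data -/

section Geometry

variable {F : Type} [Field F]

/-- The arithmetic input of the construction, for a group of order `e` and block size `2 * h`.

By `tile` and `tile_uniq`, every nonzero `t` is `2 * z j * w * c` with `w ∈ E` and `c ^ e = 1`, for
exactly one pair `(j, w)`. The condition `slope` says that `z j - z l` and `z j + z l` do not differ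
by an `e`-th root of unity; it keeps the directions of the differences inside special blocks
apart. The families `𝓕₁` and `𝓕₂` fill the lines through `0`, entirely or outside `E ∪ -E`. -/
structure CycloData (F : Type) [Field F] (e h : ℕ) where
  z : Fin h → F
  E : Set F
  𝓕₁ : Set (Finset F)
  𝓕₂ : Set (Finset F)
  even : Even e
  two_ne : (2 : F) ≠ 0
  z_ne : ∀ j, z j ≠ 0
  zero_notMem : (0 : F) ∉ E
  tile : ∀ t : F, t ≠ 0 → ∃ j, ∃ w ∈ E, ∃ c : F, c ^ e = 1 ∧ t = 2 * z j * w * c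
  tile_uniq : ∀ j j' w w' c, w ∈ E → w' ∈ E → c ^ e = 1 →
    2 * z j * w = 2 * z j' * w' * c → j = j' ∧ w = w'
  slope : ∀ j l, j ≠ l → (z j - z l) ^ e ≠ (z j + z l) ^ e
  fam₁ : IsDiffFamily (2 * h) 𝓕₁ {0}ᶜ
  fam₂ : IsDiffFamily (2 * h) 𝓕₂ {x | x ≠ 0 ∧ x ∉ E ∧ -x ∉ E}

/-- For a representation of `G` over `F` there is a `G`-invariant set `R` of nonzero vectors meeting
each line in a coset of the group of `|G|`-th roots of unity: in each orbit of `Fˣ × G` pick a vector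
`v` and take all vectors `c • g v` with `c ^ |G| = 1`. Two such vectors on a common line differ by a root
of unity, since the eigenvalues of an element of `G` are `|G|`-th roots of unity. -/
theorem exists_reps {V G : Type} [AddCommGroup V] [Module F V] [Group G] [Fintype G]
    (ρ : G →* (V ≃ₗ[F] V)) :
    ∃ R : Set V, (∀ r ∈ R, r ≠ 0) ∧ (∀ g, ∀ r ∈ R, ρ g r ∈ R) ∧
      (∀ c : F, c ^ Fintype.card G = 1 → ∀ r ∈ R, c • r ∈ R) ∧
      (∀ v, v ≠ 0 → ∃ c : F, c ≠ 0 ∧ ∃ r ∈ R, v = c • r) ∧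
      (∀ c : F, ∀ r ∈ R, c • r ∈ R → c ^ Fintype.card G = 1) := by
  classical
  set n := Fintype.card G
  have hn : n ≠ 0 := Fintype.card_ne_zero
  have hmul : ∀ g g' v, ρ (g * g') v = ρ g (ρ g' v) := fun g g' v => by simp
  have hinv : ∀ g v, ρ g⁻¹ (ρ g v) = v := fun g v => by rw [← hmul]; simp
  let s : Setoid V :=
    { r := fun x y => ∃ c : F, c ≠ 0 ∧ ∃ g, x = c • ρ g y
      iseqv := by
        refine ⟨fun x => ⟨1, one_ne_zero, 1, by simp⟩, ?_, ?_⟩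
        · rintro x y ⟨c, hc, g, rfl⟩
          refine ⟨c⁻¹, inv_ne_zero hc, g⁻¹, ?_⟩
          rw [map_smul, hinv, smul_smul, inv_mul_cancel₀ hc, one_smul]
        · rintro x y w ⟨c, hc, g, rfl⟩ ⟨c', hc', g', rfl⟩
          exact ⟨c * c', mul_ne_zero hc hc', g * g', by rw [map_smul, smul_smul, hmul]⟩ }
  let o : V → V := fun v => (Quotient.mk s v).out
  have ho : ∀ v, ∃ c : F, c ≠ 0 ∧ ∃ g, v = c • ρ g (o v) := fun v => by
    have : s.r (o v) v := Quotient.exact (s := s) (Quotient.out_eq _)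
    exact s.symm this
  have hoc : ∀ c : F, c ≠ 0 → ∀ g v, o (c • ρ g v) = o v := fun c hc g v => by
    have : Quotient.mk s (c • ρ g v) = Quotient.mk s v := Quotient.sound (s := s) ⟨c, hc, g, rfl⟩
    simp only [o, this]
  have hunit : ∀ c : F, c ^ n = 1 → c ≠ 0 := by
    rintro c hc rfl
    rw [zero_pow hn] at hc
    exact zero_ne_one hc
  have hpow : ∀ (g : G) (c : F) (v : V), ρ g v = c • v → ∀ i : ℕ, ρ (g ^ i) v = c ^ i • v := by
    intro g c v h i
    induction i with
    | zero => simp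
    | succ i ih => rw [pow_succ, hmul, h, map_smul, ih, smul_smul, pow_succ']
  refine ⟨{v | v ≠ 0 ∧ ∃ c : F, c ^ n = 1 ∧ ∃ g, v = c • ρ g (o v)}, fun r hr => hr.1, ?_, ?_, ?_,
    ?_⟩
  · rintro g r ⟨hr, c, hc, g', h⟩
    refine ⟨by simpa using hr, c, hc, g * g', ?_⟩
    have : o (ρ g r) = o r := by simpa using hoc 1 one_ne_zero g r
    rw [this, hmul, ← map_smul, ← h]
  · rintro c hc r ⟨hr, c', hc', g', h⟩
    refine ⟨smul_ne_zero (hunit c hc) hr, c * c', by rw [mul_pow, hc, hc', one_mul], g', ?_⟩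
    have : o (c • r) = o r := by simpa using hoc c (hunit c hc) 1 r
    rw [this, mul_smul, ← h]
  · intro v hv
    obtain ⟨c, hc, g, h⟩ := ho v
    refine ⟨c, hc, ρ g (o v), ⟨?_, 1, one_pow _, g, ?_⟩, h⟩
    · intro h0; rw [h0, smul_zero] at h; exact hv h
    · have : o (ρ g (o v)) = o v := by
        conv_rhs => rw [h]
        rw [hoc c hc]
        simpa using hoc 1 one_ne_zero g (o v)
      rw [this, one_smul]
  · rintro c r ⟨hr, c₁, hc₁, g₁, h₁⟩ ⟨hcr, c₂, hc₂, g₂, h₂⟩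
    have hc : c ≠ 0 := by rintro rfl; simp at hcr
    have hor : o (c • r) = o r := by simpa using hoc c hc 1 r
    rw [hor] at h₂
    have ho0 : o r ≠ 0 := by intro h0; rw [h0] at h₁; simp at h₁; exact hr h₁
    -- the two expressions of `c • r` make `o r` an eigenvector of `g₂⁻¹ * g₁`
    have hc₁0 := hunit _ hc₁
    have hc₂0 := hunit _ hc₂
    have key : ρ (g₂⁻¹ * g₁) (o r) = (c₂ / (c * c₁)) • o r := by
      have h3 : (c * c₁) • ρ g₁ (o r) = c₂ • ρ g₂ (o r) := by
        rw [mul_smul, ← h₁, h₂]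
      have h4 : ρ g₁ (o r) = (c₂ / (c * c₁)) • ρ g₂ (o r) := by
        rw [div_eq_inv_mul, mul_smul, ← h3, smul_smul, inv_mul_cancel₀ (mul_ne_zero hc hc₁0),
          one_smul]
      rw [hmul, h4, map_smul, hinv]
    have h5 := hpow _ _ _ key n
    rw [pow_card_eq_one] at h5
    have h6 : ((c₂ / (c * c₁)) ^ n - 1) • o r = 0 := by
      rw [sub_smul, ← h5]; simp
    have h7 := (smul_eq_zero.1 h6).resolve_right ho0
    rw [div_pow, mul_pow, hc₁, hc₂, mul_one, sub_eq_zero, one_div] at h7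
    exact inv_eq_one.1 h7

/-- There is a normalization on `Fin h → F`, namely the first nonzero coordinate: a homogeneous
function, nonzero off `0`, that is `1` on each `e j - e l` with `j < l`. It selects one vector on each
line. -/
theorem exists_lead (h : ℕ) : ∃ lead : (Fin h → F) → F,
    (∀ (c : F) u, lead (c • u) = c * lead u) ∧ (∀ u, u ≠ 0 → lead u ≠ 0) ∧
    ∀ j l : Fin h, j < l → lead (Pi.single j 1 - Pi.single l 1) = 1 := by
  classical
  have hex : ∀ u : Fin h → F, ∃ x : F, (u = 0 → x = 0) ∧
      ∀ i, u i ≠ 0 → (∀ j < i, u j = 0) → x = u i := by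
    intro u
    by_cases hu : u = 0
    · exact ⟨0, fun _ => rfl, fun i hi => absurd (congrFun hu i) hi⟩
    obtain ⟨i, hi⟩ := Function.ne_iff.1 hu
    obtain ⟨m, hm, hmin⟩ := (Finset.univ.filter fun i => u i ≠ 0).exists_min_image id
      ⟨i, by simpa using hi⟩
    simp only [Finset.mem_filter, Finset.mem_univ, true_and, id] at hm hmin
    refine ⟨u m, fun h => absurd h hu, fun i hi hlt => ?_⟩
    rcases lt_or_eq_of_le (hmin i hi) with h | h
    · exact absurd (hlt m h) hm
    · rw [h]
  -- `lead u` is the first nonzero coordinate of `u`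
  choose lead h0 h1 using hex
  have hfirst : ∀ u : Fin h → F, u ≠ 0 → ∃ i, u i ≠ 0 ∧ ∀ j < i, u j = 0 := by
    intro u hu
    obtain ⟨i, hi⟩ := Function.ne_iff.1 hu
    obtain ⟨m, hm, hmin⟩ := (Finset.univ.filter fun i => u i ≠ 0).exists_min_image id
      ⟨i, by simpa using hi⟩
    simp only [Finset.mem_filter, Finset.mem_univ, true_and, id] at hm hmin
    refine ⟨m, hm, fun j hj => ?_⟩
    by_contra hne
    exact absurd (hmin j hne) (not_le.2 hj)
  refine ⟨lead, ?_, ?_, ?_⟩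
  · intro c u
    by_cases hc : c = 0
    · subst hc; rw [zero_mul]; exact h0 _ (zero_smul _ _)
    by_cases hu : u = 0
    · subst hu; rw [smul_zero, h0 _ rfl, mul_zero]
    obtain ⟨i, hi, hlt⟩ := hfirst u hu
    rw [h1 u i hi hlt, h1 (c • u) i (by simp [hc, hi]) (fun j hj => by simp [hlt j hj])]
    simp
  · intro u hu
    obtain ⟨i, hi, hlt⟩ := hfirst u hu
    rwa [h1 u i hi hlt]
  · intro j l hjl
    rw [h1 _ j] <;> simp [Pi.single_apply, hjl.ne]
    intro i hi
    simp [hi.ne, (hi.trans hjl).ne]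

/-! ### The base blocks -/

section Blocks

variable {V : Type} [AddCommGroup V] [Module F V] {h : ℕ}

open Classical in
/-- The special block `{(± z j * w • a, w • e j) : j < h}`, where `e j` is the `j`-th unit vector. -/
noncomputable def specialBlock (z : Fin h → F) (a : V) (w : F) : Finset (V × (Fin h → F)) :=
  (Finset.univ ×ˢ {1, -1} : Finset (Fin h × F)).image
    fun p => ((p.2 * z p.1 * w) • a, Pi.single p.1 w)

open Classical in
/-- The copy `{x • d : x ∈ L}` of `L` on the line spanned by `d`. -/
noncomputable def lineBlock (L : Finset F) (d : V × (Fin h → F)) : Finset (V × (Fin h → F)) :=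
  L.image fun x => x • d

theorem mem_specialBlock {z : Fin h → F} {a : V} {w : F} {x : V × (Fin h → F)} :
    x ∈ specialBlock z a w ↔
      ∃ j, ∃ s : F, (s = 1 ∨ s = -1) ∧ x = ((s * z j * w) • a, Pi.single j w) := by
  simp only [specialBlock, Finset.mem_image, Finset.mem_product, Finset.mem_univ, true_and,
    Finset.mem_insert, Finset.mem_singleton, Prod.exists]
  constructor
  · rintro ⟨j, s, hs, rfl⟩; exact ⟨j, s, hs, rfl⟩
  · rintro ⟨j, s, hs, rfl⟩; exact ⟨j, s, hs, rfl⟩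

theorem mem_lineBlock {L : Finset F} {d x : V × (Fin h → F)} :
    x ∈ lineBlock L d ↔ ∃ t ∈ L, x = t • d := by
  simp only [lineBlock, Finset.mem_image, eq_comm]

theorem specialBlock_neg (z : Fin h → F) (a : V) (w : F) :
    specialBlock z (-a) w = specialBlock z a w := by
  have key : ∀ b : V, specialBlock z (-b) w ⊆ specialBlock z b w := by
    intro b x hx
    obtain ⟨j, s, hs, rfl⟩ := mem_specialBlock.1 hx
    refine mem_specialBlock.2 ⟨j, -s, ?_, ?_⟩
    · rcases hs with rfl | rfl <;> simp
    · simp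
  refine (key a).antisymm ?_
  simpa using key (-a)

/-- `d` is, up to a scalar, a difference of two points with distinct second components in a special
block. -/
def IsSpecial (z : Fin h → F) (R : Set V) (d : V × (Fin h → F)) : Prop :=
  ∃ j l : Fin h, j < l ∧ d.2 = Pi.single j 1 - Pi.single l 1 ∧
    ∃ s : F, (s = 1 ∨ s = -1) ∧ ∃ a ∈ R, d.1 = (z j - s * z l) • a

variable {e : ℕ}

/-- The base blocks: all special blocks, and on each line `F d` outside the first factor (with `d`
normalized by `lead`) the members of `𝓕₂` if the direction `d` is special and of `𝓕₁` otherwise. -/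
def baseBlocks (C : CycloData F e h) (R : Set V) (lead : (Fin h → F) → F) :
    Set (Finset (V × (Fin h → F))) :=
  {A | (∃ a ∈ R, ∃ w ∈ C.E, A = specialBlock C.z a w) ∨
    ∃ d : V × (Fin h → F), lead d.2 = 1 ∧ ∃ L, (IsSpecial C.z R d → L ∈ C.𝓕₂) ∧
      (¬ IsSpecial C.z R d → L ∈ C.𝓕₁) ∧ A = lineBlock L d}

/-- A linear automorphism of the first factor that preserves `R` preserves the family of base
blocks. -/
theorem map_mem_baseBlocks {C : CycloData F e h} {R : Set V} {lead : (Fin h → F) → F}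
    (T : V ≃ₗ[F] V) (hT : ∀ r ∈ R, T r ∈ R) (hT' : ∀ r ∈ R, T.symm r ∈ R)
    {A : Finset (V × (Fin h → F))} (hA : A ∈ baseBlocks C R lead)
    (f : V × (Fin h → F) ↪ V × (Fin h → F)) (hf : ∀ x, f x = (T x.1, x.2)) :
    A.map f ∈ baseBlocks C R lead := by
  rcases hA with ⟨a, ha, w, hw, rfl⟩ | ⟨d, hd, L, h1, h2, rfl⟩
  · refine Or.inl ⟨T a, hT a ha, w, hw, ?_⟩
    ext x
    simp only [Finset.mem_map, mem_specialBlock]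
    constructor
    · rintro ⟨_, ⟨j, s, hs, rfl⟩, rfl⟩
      exact ⟨j, s, hs, by simp [hf]⟩
    · rintro ⟨j, s, hs, rfl⟩
      exact ⟨_, ⟨j, s, hs, rfl⟩, by simp [hf]⟩
  · have hsp : IsSpecial C.z R (T d.1, d.2) ↔ IsSpecial C.z R d := by
      constructor
      · rintro ⟨j, l, hjl, h2, s, hs, a, ha, h1⟩
        refine ⟨j, l, hjl, h2, s, hs, T.symm a, hT' a ha, ?_⟩
        rw [← map_smul, ← h1]; simp
      · rintro ⟨j, l, hjl, h2, s, hs, a, ha, h1⟩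
        exact ⟨j, l, hjl, h2, s, hs, T a, hT a ha, by rw [← map_smul, ← h1]⟩
    refine Or.inr ⟨(T d.1, d.2), hd, L, fun h => h1 (hsp.1 h), fun h => h2 (mt hsp.2 h), ?_⟩
    ext x
    simp only [Finset.mem_map, mem_lineBlock]
    constructor
    · rintro ⟨_, ⟨t, ht, rfl⟩, rfl⟩
      exact ⟨t, ht, by simp [hf]⟩
    · rintro ⟨t, ht, rfl⟩
      exact ⟨_, ⟨t, ht, rfl⟩, by simp [hf]⟩

/-- `E` and `-E` are disjoint: `-1` is an `e`-th root of unity, so `tile_uniq` applies to `w` and `-w`. -/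
theorem CycloData.neg_notMem (C : CycloData F e h) {w : F} (hw : w ∈ C.E) : -w ∉ C.E := by
  intro hw'
  obtain ⟨j, -⟩ := C.tile 1 one_ne_zero
  have hww := (C.tile_uniq j j w (-w) (-1) hw hw' C.even.neg_one_pow (by ring)).2
  have h0 : 2 * w = 0 := by linear_combination hww
  rcases mul_eq_zero.1 h0 with h0 | h0
  · exact C.two_ne h0
  · exact C.zero_notMem (h0 ▸ hw)

theorem CycloData.sub_ne (C : CycloData F e h) {j l : Fin h} (hjl : j ≠ l) {s : F}
    (hs : s = 1 ∨ s = -1) : C.z j - s * C.z l ≠ 0 := by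
  intro h0
  obtain ⟨-, w, hw, -⟩ := C.tile 1 one_ne_zero
  have hse : s ^ e = 1 := by
    rcases hs with rfl | rfl
    · simp
    · exact C.even.neg_one_pow
  exact hjl (C.tile_uniq j l w w s hw hw hse (by linear_combination 2 * w * h0)).1

theorem CycloData.slope_inj (C : CycloData F e h) {j l : Fin h} (hjl : j ≠ l) {s s' c : F}
    (hs : s = 1 ∨ s = -1) (hs' : s' = 1 ∨ s' = -1) (hc : c ^ e = 1)
    (heq : C.z j - s * C.z l = c * (C.z j - s' * C.z l)) : s = s' := by
  have h1 : (C.z j - s * C.z l) ^ e = (C.z j - s' * C.z l) ^ e := by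
    rw [heq, mul_pow, hc, one_mul]
  have h2 := C.slope j l hjl
  rcases hs with rfl | rfl <;> rcases hs' with rfl | rfl
  · rfl
  · exact absurd (by simpa using h1) h2
  · exact absurd (by simpa using h1.symm) h2
  · rfl

/-- Because a special block does not change under `a ↦ -a`, one of any two of its points can be
assumed to carry the sign `+`. -/
theorem specialBlock_normal (C : CycloData F e h) {R : Set V}
    (hRneg : ∀ r ∈ R, -r ∈ R) {a : V} {w : F} (ha : a ∈ R) {x y : V × (Fin h → F)}
    (hx : x ∈ specialBlock C.z a w) (hy : y ∈ specialBlock C.z a w) :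
    ∃ b ∈ R, specialBlock C.z b w = specialBlock C.z a w ∧ ∃ j l, ∃ s : F, (s = 1 ∨ s = -1) ∧
      x = ((C.z j * w) • b, Pi.single j w) ∧ y = ((s * C.z l * w) • b, Pi.single l w) := by
  obtain ⟨j, s, hs, rfl⟩ := mem_specialBlock.1 hx
  obtain ⟨l, s', hs', rfl⟩ := mem_specialBlock.1 hy
  rcases hs with rfl | rfl
  · exact ⟨a, ha, rfl, j, l, s', hs', by simp, rfl⟩
  · refine ⟨-a, hRneg a ha, specialBlock_neg _ _ _, j, l, -s', ?_, by simp, by simp⟩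
    rcases hs' with rfl | rfl <;> simp

theorem single_sub_eq {j l j' l' : Fin h} {w w' : F} (hjl : j ≠ l) (hw : w ≠ 0)
    (heq : (Pi.single j w - Pi.single l w : Fin h → F) = Pi.single j' w' - Pi.single l' w') :
    (j = j' ∧ l = l' ∧ w = w') ∨ (j = l' ∧ l = j' ∧ w = -w') := by
  have hj := congrFun heq j
  have hl := congrFun heq l
  simp only [Pi.sub_apply, Pi.single_apply, if_true, hjl, hjl.symm, if_false] at hj hl
  split_ifs at hj hl <;> grind

/-- The base blocks cover each nonzero difference exactly once. Differences with second component `0`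
come from the two points of a special block over the same `w • e j`, and are governed by the tiling;
the others lie on a unique line `F d` with `lead d.2 = 1` and are shared between the special blocks
(scalars in `±E`) and the line blocks. -/
theorem isDiffFamily_baseBlocks (C : CycloData F e h) {R : Set V} {lead : (Fin h → F) → F}
    (hR0 : ∀ r ∈ R, r ≠ 0) (hRc : ∀ c : F, c ^ e = 1 → ∀ r ∈ R, c • r ∈ R)
    (hRcov : ∀ v, v ≠ 0 → ∃ c : F, c ≠ 0 ∧ ∃ r ∈ R, v = c • r)
    (hRuniq : ∀ c : F, ∀ r ∈ R, c • r ∈ R → c ^ e = 1)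
    (hlead : ∀ (c : F) u, lead (c • u) = c * lead u) (hlead0 : ∀ u, u ≠ 0 → lead u ≠ 0)
    (hlead1 : ∀ j l : Fin h, j < l → lead (Pi.single j 1 - Pi.single l 1) = 1) :
    IsDiffFamily (2 * h) (baseBlocks C R lead) {0}ᶜ := by
  classical
  have hRneg : ∀ r ∈ R, -r ∈ R := fun r hr => by
    simpa using hRc (-1) C.even.neg_one_pow r hr
  have hE0 : ∀ w ∈ C.E, w ≠ 0 := fun w hw h0 => C.zero_notMem (h0 ▸ hw)
  have hsingle : ∀ (j : Fin h) (w : F), (Pi.single j w : Fin h → F) = w • Pi.single j 1 :=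
    fun j w => by rw [← Pi.single_smul]; simp
  have hd0 : ∀ d : V × (Fin h → F), lead d.2 = 1 → d ≠ 0 := by
    rintro d hd rfl
    have := hlead 0 0
    simp at this
    simp [this] at hd
  have hlinj : ∀ d : V × (Fin h → F), lead d.2 = 1 → Function.Injective fun t : F => t • d :=
    fun d hd => smul_left_injective F (hd0 d hd)
  -- an off-axis difference inside a special block has a special direction and lies over `±E`
  have hnorm : ∀ (b : V) (w s : F) (j l : Fin h), b ∈ R → w ∈ C.E → (s = 1 ∨ s = -1) → j ≠ l →
      ∀ (c : F) (d : V × (Fin h → F)), lead d.2 = 1 →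
      (((C.z j * w) • b, Pi.single j w) - ((s * C.z l * w) • b, Pi.single l w)
        : V × (Fin h → F)) = c • d → IsSpecial C.z R d ∧ (c ∈ C.E ∨ -c ∈ C.E) := by
    intro b w s j l hb hw hs hjl c d hd heq
    have h1 : (w * (C.z j - s * C.z l)) • b = c • d.1 := by
      have := congrArg Prod.fst heq
      simp only [Prod.fst_sub, Prod.smul_fst] at this
      rw [← this, ← sub_smul]; congr 1; ring
    have h2 : w • (Pi.single j 1 - Pi.single l 1 : Fin h → F) = c • d.2 := by
      have := congrArg Prod.snd heq
      simp only [Prod.snd_sub, Prod.smul_snd] at this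
      rw [← this, smul_sub, ← hsingle, ← hsingle]
    have h3 := congrArg lead h2
    rw [hlead, hlead, hd, mul_one] at h3
    have hw0 := hE0 w hw
    rcases lt_or_gt_of_ne hjl with hlt | hlt
    · rw [hlead1 _ _ hlt, mul_one] at h3
      subst h3
      refine ⟨⟨j, l, hlt, (smul_right_injective _ hw0 h2).symm, s, hs, b, hb, ?_⟩, Or.inl hw⟩
      rw [mul_smul] at h1
      exact (smul_right_injective _ hw0 h1).symm
    · rw [← neg_sub, ← neg_one_smul F, hlead, hlead1 _ _ hlt, mul_one, mul_neg_one] at h3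
      subst h3
      refine ⟨⟨l, j, hlt, ?_, s, hs, s • b, ?_, ?_⟩, Or.inr (by simpa using hw)⟩
      · refine smul_right_injective _ hw0 ?_
        simp only
        rw [neg_smul] at h2
        rw [← neg_sub (Pi.single j 1) (Pi.single l 1), smul_neg, h2, neg_neg]
      · rcases hs with rfl | rfl
        · simpa using hb
        · simpa using hRneg b hb
      · refine smul_right_injective _ hw0 ?_
        simp only
        rw [neg_smul] at h1
        rw [← neg_inj, ← h1, smul_smul, smul_smul, ← neg_smul]
        congr 1
        rcases hs with rfl | rfl <;> ring
  refine ⟨?_, ?_, ?_, ?_⟩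
  -- every base block has `2 * h` points
  · rintro A (⟨a, ha, w, hw, rfl⟩ | ⟨d, hd, L, h1, h2, rfl⟩)
    · rw [specialBlock, Finset.card_image_of_injOn, Finset.card_product]
      · have : (1 : F) ≠ -1 := fun h0 => C.two_ne (by linear_combination h0)
        simp [Finset.card_pair this, mul_comm]
      · rintro ⟨j, s⟩ hj ⟨j', s'⟩ hj' heq
        simp only [Prod.mk.injEq] at heq
        have hw0 := hE0 w hw
        have hjj : j = j' := by
          by_contra hne
          have := congrFun heq.2 j
          simp [hne, hw0] at this
        subst hjj
        have h3 := smul_left_injective F (hR0 a ha) heq.1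
        have := mul_right_cancel₀ (C.z_ne j) (mul_right_cancel₀ hw0 h3)
        rw [this]
    · rw [lineBlock, Finset.card_image_of_injective _ (hlinj d hd)]
      by_cases hs : IsSpecial C.z R d
      · exact C.fam₂.card L (h1 hs)
      · exact C.fam₁.card L (h2 hs)
  -- every nonzero difference is covered
  · rintro ⟨a, u⟩ hne
    by_cases hu : u = 0
    · subst hu
      have ha : a ≠ 0 := fun h0 => hne (by simp [h0])
      obtain ⟨t, ht, r, hr, rfl⟩ := hRcov a ha
      obtain ⟨j, w, hw, c, hc, rfl⟩ := C.tile t ht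
      refine ⟨_, Or.inl ⟨c • r, hRc c hc r hr, w, hw, rfl⟩, ((1 * C.z j * w) • c • r, Pi.single j w),
        mem_specialBlock.2 ⟨j, 1, Or.inl rfl, rfl⟩, ((-1 * C.z j * w) • c • r, Pi.single j w),
        mem_specialBlock.2 ⟨j, -1, Or.inr rfl, rfl⟩, ?_⟩
      rw [Prod.mk_sub_mk, sub_self, ← sub_smul, smul_smul]
      congr 2; ring
    · set t := lead u with ht
      have ht0 : t ≠ 0 := hlead0 u hu
      obtain ⟨d, hd, hdt⟩ : ∃ d : V × (Fin h → F), lead d.2 = 1 ∧ (a, u) = t • d := by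
        refine ⟨t⁻¹ • (a, u), ?_, (smul_inv_smul₀ ht0 _).symm⟩
        simp [hlead, ← ht, inv_mul_cancel₀ ht0]
      rw [hdt]
      by_cases hs : IsSpecial C.z R d
      · by_cases hE : t ∈ C.E ∨ -t ∈ C.E
        · obtain ⟨j, l, hjl, h2, s, hs, b, hb, h1⟩ := hs
          obtain ⟨d₁, d₂⟩ := d
          simp only at h1 h2
          subst h1 h2
          rcases hE with hE | hE
          · refine ⟨_, Or.inl ⟨b, hb, t, hE, rfl⟩, ((1 * C.z j * t) • b, Pi.single j t),
              mem_specialBlock.2 ⟨j, 1, Or.inl rfl, rfl⟩, ((s * C.z l * t) • b, Pi.single l t),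
              mem_specialBlock.2 ⟨l, s, hs, rfl⟩, ?_⟩
            rw [Prod.mk_sub_mk, Prod.smul_mk, smul_smul, smul_sub, ← hsingle, ← hsingle,
              ← sub_smul]
            congr 2; ring
          · refine ⟨_, Or.inl ⟨b, hb, -t, hE, rfl⟩, ((s * C.z l * -t) • b, Pi.single l (-t)),
              mem_specialBlock.2 ⟨l, s, hs, rfl⟩, ((1 * C.z j * -t) • b, Pi.single j (-t)),
              mem_specialBlock.2 ⟨j, 1, Or.inl rfl, rfl⟩, ?_⟩
            rw [Prod.mk_sub_mk, Prod.smul_mk, smul_smul, smul_sub, ← hsingle, ← hsingle,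
              ← sub_smul, Pi.single_neg, Pi.single_neg]
            congr 1
            · congr 1; ring
            · abel
        · obtain ⟨L, hL, x, hx, y, hy, hxy⟩ := C.fam₂.cover t ⟨ht0, not_or.1 hE⟩
          exact ⟨_, Or.inr ⟨d, hd, L, fun _ => hL, fun h0 => absurd hs h0, rfl⟩, x • d,
            mem_lineBlock.2 ⟨x, hx, rfl⟩, y • d, mem_lineBlock.2 ⟨y, hy, rfl⟩,
            by rw [← sub_smul, hxy]⟩
      · obtain ⟨L, hL, x, hx, y, hy, hxy⟩ := C.fam₁.cover t ht0
        exact ⟨_, Or.inr ⟨d, hd, L, fun h0 => absurd h0 hs, fun _ => hL, rfl⟩, x • d,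
          mem_lineBlock.2 ⟨x, hx, rfl⟩, y • d, mem_lineBlock.2 ⟨y, hy, rfl⟩,
          by rw [← sub_smul, hxy]⟩
  · intro A _ x _ y _ hxy
    simpa [sub_eq_zero] using hxy
  · -- a special block and a line block never share a nonzero difference
    have hmixed : ∀ a ∈ R, ∀ w ∈ C.E, ∀ d : V × (Fin h → F), lead d.2 = 1 → ∀ L,
        (IsSpecial C.z R d → L ∈ C.𝓕₂) → ∀ x ∈ specialBlock C.z a w, ∀ y ∈ specialBlock C.z a w,
        ∀ x' ∈ lineBlock L d, ∀ y' ∈ lineBlock L d, x ≠ y → x - y = x' - y' → False := by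
      intro a ha w hw d hd L h1 x hx y hy x' hx' y' hy' hne heq
      obtain ⟨t, ht, rfl⟩ := mem_lineBlock.1 hx'
      obtain ⟨t', ht', rfl⟩ := mem_lineBlock.1 hy'
      obtain ⟨b, hb, -, j, l, s, hs, rfl, rfl⟩ := specialBlock_normal C hRneg ha hx hy
      rw [← sub_smul] at heq
      have htt : t - t' ≠ 0 := by
        intro h0; rw [h0, zero_smul, sub_eq_zero] at heq; exact hne heq
      have hjl : j ≠ l := by
        rintro rfl
        have := congrArg (fun q => lead q.2) heq
        simp only [Prod.snd_sub, sub_self, Prod.smul_snd, hlead, hd, mul_one] at this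
        have h00 := hlead 0 0
        rw [zero_smul, zero_mul] at h00
        exact htt (by rw [← this, h00])
      obtain ⟨hsp, hE⟩ := hnorm b w s j l hb hw hs hjl _ d hd heq
      have := C.fam₂.mem L (h1 hsp) t ht t' ht' (sub_ne_zero.1 htt)
      exact hE.elim this.2.1 this.2.2
    rintro A (⟨a, ha, w, hw, rfl⟩ | ⟨d, hd, L, h1, h2, rfl⟩) A'
      (⟨a', ha', w', hw', rfl⟩ | ⟨d', hd', L', h1', h2', rfl⟩) x hx y hy x' hx' y' hy' hne heq
    -- two special blocks
    · obtain ⟨b, hb, hA, j, l, s, hs, rfl, rfl⟩ := specialBlock_normal C hRneg ha hx hy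
      obtain ⟨b', hb', hA', j', l', s', hs', rfl, rfl⟩ :=
        specialBlock_normal C hRneg ha' hx' hy'
      rw [← hA, ← hA']
      have hw0 := hE0 w hw
      have hw0' := hE0 w' hw'
      have e1 : (w * (C.z j - s * C.z l)) • b = (w' * (C.z j' - s' * C.z l')) • b' := by
        have := congrArg Prod.fst heq
        simp only [Prod.fst_sub, ← sub_smul] at this
        convert this using 2 <;> ring
      have e2 := congrArg Prod.snd heq
      simp only [Prod.snd_sub] at e2
      -- `b'` is a multiple of `b`, and membership in `R` makes the factor an `e`-th root of unity
      have hprop : ∀ p p' : F, p' ≠ 0 → p • b = p' • b' →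
          ∃ c : F, c ^ e = 1 ∧ b' = c • b ∧ p = p' * c := by
        intro p p' hp' hpp
        have hb'' : b' = (p / p') • b := by
          rw [div_eq_inv_mul, mul_smul, hpp, inv_smul_smul₀ hp']
        exact ⟨p / p', hRuniq _ b hb (hb'' ▸ hb'), hb'', by field_simp⟩
      by_cases hjl : j = l
      · subst hjl
        have hjl' : j' = l' := by
          by_contra hjl'
          have := congrFun e2 j'
          simp [hjl'] at this
          exact hw0' this.symm
        subst hjl'
        have hs1 : ∀ (t : F) (i : Fin h) (v : V) (q : F), (t = 1 ∨ t = -1) →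
            (((C.z i * q) • v, Pi.single i q) : V × (Fin h → F)) ≠
              ((t * C.z i * q) • v, Pi.single i q) → t = -1 := by
          rintro t i v q (rfl | rfl) h0
          · simp at h0
          · rfl
        obtain rfl := hs1 s j b w hs hne
        obtain rfl := hs1 s' j' b' w' hs' (by
          intro h0; rw [h0, sub_self] at heq; exact hne (sub_eq_zero.1 heq))
        obtain ⟨c, hc, rfl, hpp⟩ := hprop _ _ (by
          have := mul_ne_zero hw0' (mul_ne_zero C.two_ne (C.z_ne j'))
          intro h0; apply this; rw [← h0]; ring) e1
        obtain ⟨rfl, rfl⟩ := C.tile_uniq j j' w w' c hw hw' hc (by linear_combination hpp)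
        have hc1 : c = 1 := by
          have := mul_ne_zero hw0 (mul_ne_zero C.two_ne (C.z_ne j))
          apply mul_left_cancel₀ this
          linear_combination -hpp
        subst hc1
        simp
      · rcases single_sub_eq hjl hw0 e2 with ⟨rfl, rfl, rfl⟩ | ⟨-, -, rfl⟩
        · obtain ⟨c, hc, rfl, hpp⟩ := hprop _ _ (mul_ne_zero hw0 (C.sub_ne hjl hs')) e1
          have hpp' : C.z j - s * C.z l = c * (C.z j - s' * C.z l) := by
            apply mul_left_cancel₀ hw0; linear_combination hpp
          obtain rfl := C.slope_inj hjl hs hs' hc hpp'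
          have hc1 : c = 1 := by
            apply mul_right_cancel₀ (C.sub_ne hjl hs)
            linear_combination -hpp'
          subst hc1
          simp
        · exact absurd hw (C.neg_notMem hw')
    · exact (hmixed a ha w hw d' hd' L' h1' x hx y hy x' hx' y' hy' hne heq).elim
    · refine (hmixed a' ha' w' hw' d hd L h1 x' hx' y' hy' x hx y hy ?_ heq.symm).elim
      rintro rfl
      rw [sub_self, sub_eq_zero] at heq
      exact hne heq
    -- two line blocks: comparing `lead` shows that they lie on the same line
    · obtain ⟨t, ht, rfl⟩ := mem_lineBlock.1 hx
      obtain ⟨r, hr, rfl⟩ := mem_lineBlock.1 hy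
      obtain ⟨t', ht', rfl⟩ := mem_lineBlock.1 hx'
      obtain ⟨r', hr', rfl⟩ := mem_lineBlock.1 hy'
      rw [← sub_smul, ← sub_smul] at heq
      have htr : t ≠ r := by rintro rfl; exact hne rfl
      have hpp := congrArg (fun q => lead q.2) heq
      simp only [Prod.smul_snd, hlead, hd, hd', mul_one] at hpp
      rw [← hpp] at heq
      obtain rfl := smul_right_injective _ (sub_ne_zero.2 htr) heq
      by_cases hs : IsSpecial C.z R d
      · obtain ⟨rfl, rfl⟩ := C.fam₂.uniq L (h1 hs) L' (h1' hs) t ht r hr t' ht' r' hr' htr hpp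
        exact ⟨rfl, rfl⟩
      · obtain ⟨rfl, rfl⟩ := C.fam₁.uniq L (h2 hs) L' (h2' hs) t ht r hr t' ht' r' hr' htr hpp
        exact ⟨rfl, rfl⟩

/-- The base blocks for the permutation representation of `G` on `G → F` develop into a design with
`|F| ^ (|G| + h)` points on which `G` acts faithfully. -/
theorem design_of_cycloData {G : Type} [Group G] [Fintype G] [Fintype F]
    (C : CycloData F (Fintype.card G) h) :
    ∃ v, Fintype.card F ≤ v ∧ ∃ (D : Design (Fin v) (2 * h)) (f : G →* Equiv.Perm (Fin v)),
      Function.Injective f ∧ ∀ g : G, IsAuto D (f g) := by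
  classical
  let ρ : G →* ((G → F) ≃ₗ[F] (G → F)) :=
    { toFun := fun g => LinearEquiv.funCongrLeft F F (Equiv.mulLeft g⁻¹)
      map_one' := by ext; simp
      map_mul' := by intro g g'; ext; simp [mul_assoc] }
  obtain ⟨R, hR0, hRg, hRc, hRcov, hRuniq⟩ := exists_reps ρ
  obtain ⟨lead, hl, hl0, hl1⟩ := exists_lead (F := F) h
  have hfam := isDiffFamily_baseBlocks C hR0 hRc hRcov hRuniq hl hl0 hl1
  let σ : G →* Equiv.Perm ((G → F) × (Fin h → F)) :=
    { toFun := fun g => Equiv.prodCongr (ρ g).toEquiv (Equiv.refl _)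
      map_one' := by ext <;> simp
      map_mul' := by intro g g'; ext <;> simp }
  refine ⟨_, ?_, design_of_diffFamily hfam σ ?_ ?_ ?_⟩
  · refine Fintype.card_le_of_injective (fun x : F => ((fun _ : G => x), (0 : Fin h → F))) ?_
    intro x y hxy
    exact congrFun (congrArg Prod.fst hxy) 1
  · intro g g' hgg
    have h1 := congrArg (fun s => (s ((Pi.single 1 1 : G → F), (0 : Fin h → F))).1 g) hgg
    by_contra hne
    have h2 : g'⁻¹ * g ≠ 1 := fun h0 => hne (by rw [inv_mul_eq_one] at h0; exact h0.symm)
    simp [σ, ρ, LinearEquiv.funCongrLeft, h2] at h1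
  · intro g x y
    ext <;> simp [σ]
  · intro g A hA
    refine map_mem_baseBlocks (ρ g) (hRg g) ?_ hA _ (fun x => rfl)
    intro r hr
    have := hRg g⁻¹ r hr
    rwa [map_inv] at this

end Blocks

end Geometry

/-! ### Prescribed differences in large finite fields -/

section Cyclotomy

open Finset

theorem card_fiber_le {F : Type} [Field F] [Fintype F] [DecidableEq F] {r : ℕ} (hr : 0 < r)
    (κ : F) : (univ.filter fun y : F => y ^ r = κ).card ≤ r := by
  refine le_trans (card_le_card ?_) (le_trans (Multiset.toFinset_card_le _)
    (Polynomial.card_nthRoots r κ))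
  intro y hy
  rw [Multiset.mem_toFinset, Polynomial.mem_nthRoots hr]
  exact (mem_filter.1 hy).2

open Classical in
/-- The elements of `A` that differ from `x` by an element with `r`-th power `κ`. -/
noncomputable def nbr {F : Type} [Field F] (r : ℕ) (A : Finset F) (κ x : F) : Finset F :=
  A.filter fun a => (a - x) ^ r = κ

/-- First moment: each `a ∈ A` lies in exactly one of the sets `nbr r A κ x` for each `x ≠ a`. -/
theorem sum_nbr_card {F : Type} [Field F] [Fintype F] {M r : ℕ}
    (hq : Fintype.card F = M * r + 1) {Q : Finset F} (hQ : ∀ y, y ∈ Q ↔ y ^ M = 1)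
    (A : Finset F) :
    ∑ x : F, ∑ κ ∈ Q, (nbr r A κ x).card = A.card * (M * r) := by
  classical
  have hunit : ∀ y : F, y ^ r ∈ Q ↔ y ≠ 0 := by
    intro y
    rw [hQ, ← pow_mul, mul_comm]
    constructor
    · rintro h rfl
      rcases Nat.eq_zero_or_pos (M * r) with h0 | h0
      · rw [h0] at hq
        have := Fintype.one_lt_card (α := F)
        omega
      · rw [zero_pow h0.ne'] at h; exact zero_ne_one h
    · intro h
      have := FiniteField.pow_card_sub_one_eq_one y h
      rwa [hq, Nat.add_sub_cancel] at this
  have h1 : ∀ x : F, ∑ κ ∈ Q, (nbr r A κ x).card = ∑ a ∈ A, if a ≠ x then 1 else 0 := by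
    intro x
    simp only [nbr, card_filter]
    rw [sum_comm]
    refine sum_congr rfl fun a _ => ?_
    rw [sum_ite_eq]
    simp [hunit, sub_eq_zero]
  simp only [h1]
  rw [sum_comm]
  have h2 : ∀ a ∈ A, (∑ x : F, if a ≠ x then 1 else 0) = M * r := by
    intro a _
    rw [← card_filter, filter_ne, card_erase_of_mem (mem_univ _), card_univ, hq]
    simp
  rw [sum_congr rfl h2]
  simp

/-- Second moment: for `a ≠ b`, at most `r` points `x` see `a` and `b` in the same class, since then
`(a - x) / (b - x)` is an `r`-th root of unity. -/
theorem sum_nbr_card_sq {F : Type} [Field F] [Fintype F] {M r : ℕ} (hr : 0 < r)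
    (hq : Fintype.card F = M * r + 1) {Q : Finset F} (hQ : ∀ y, y ∈ Q ↔ y ^ M = 1)
    (A : Finset F) :
    ∑ x : F, ∑ κ ∈ Q, (nbr r A κ x).card ^ 2 ≤ A.card * (M * r) + A.card ^ 2 * r := by
  classical
  have hzero : (0 : F) ∉ Q := by
    intro h
    rw [hQ] at h
    rcases Nat.eq_zero_or_pos M with h0 | h0
    · rw [h0] at hq
      have := Fintype.one_lt_card (α := F)
      omega
    · rw [zero_pow h0.ne'] at h; exact zero_ne_one h
  have h1 : ∀ x : F, ∑ κ ∈ Q, (nbr r A κ x).card ^ 2 ≤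
      ∑ a ∈ A, ∑ b ∈ A, if a ≠ x ∧ (a - x) ^ r = (b - x) ^ r then 1 else 0 := by
    intro x
    have : ∀ κ ∈ Q, (nbr r A κ x).card ^ 2 = ∑ a ∈ A, ∑ b ∈ A,
        (if (a - x) ^ r = κ then 1 else 0) * (if (b - x) ^ r = κ then 1 else 0) := by
      intro κ _
      rw [← sum_mul_sum, sq, nbr, card_filter]
    rw [sum_congr rfl this, sum_comm]
    refine sum_le_sum fun a _ => ?_
    rw [sum_comm]
    refine sum_le_sum fun b _ => ?_
    simp only [ite_mul, one_mul, zero_mul]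
    rw [sum_ite_eq]
    by_cases hax : a = x
    · subst hax; simp [zero_pow hr.ne', hzero]
    · by_cases h2 : (b - x) ^ r = (a - x) ^ r
      · have h3 : a ≠ x ∧ (a - x) ^ r = (b - x) ^ r := ⟨hax, h2.symm⟩
        simp only [if_pos h2, if_pos h3]
        split_ifs <;> simp
      · simp [h2]
  refine (sum_le_sum fun x _ => h1 x).trans ?_
  rw [sum_comm]
  have h2 : ∀ a ∈ A, (∑ x : F, ∑ b ∈ A,
      if a ≠ x ∧ (a - x) ^ r = (b - x) ^ r then 1 else 0) ≤ M * r + A.card * r := by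
    intro a ha
    rw [sum_comm, ← add_sum_erase _ _ ha]
    refine add_le_add ?_ ?_
    · simp only [and_true]
      rw [← card_filter, filter_ne, card_erase_of_mem (mem_univ _), card_univ, hq]
      simp
    · refine le_trans (sum_le_card_nsmul _ _ r ?_) ?_
      · intro b hb
        have hba := ne_of_mem_erase hb
        rw [← card_filter]
        refine le_trans ?_ (card_fiber_le hr (1 : F))
        have hbx : ∀ x : F, a ≠ x → (a - x) ^ r = (b - x) ^ r → b - x ≠ 0 := by
          intro x hax h h0
          rw [h0, zero_pow hr.ne'] at h
          exact hax (sub_eq_zero.1 (pow_eq_zero_iff hr.ne' |>.1 h))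
        -- `x ↦ (a - x) / (b - x)` is injective
        refine card_le_card_of_injOn (fun x => (a - x) / (b - x)) ?_ ?_
        · intro x hx
          obtain ⟨hax, h⟩ := (mem_filter.1 hx).2
          have := hbx x hax h
          refine mem_filter.2 ⟨mem_univ _, ?_⟩
          rw [div_pow, h, div_self (pow_ne_zero _ this)]
        · intro x hx y hy hxy
          obtain ⟨hax, h⟩ := (mem_filter.1 hx).2
          obtain ⟨hay, h'⟩ := (mem_filter.1 hy).2
          have h3 := hbx x hax h
          have h4 := hbx y hay h'
          simp only at hxy
          rw [div_eq_div_iff h3 h4] at hxy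
          have h5 : (b - a) * (x - y) = 0 := by linear_combination -hxy
          rcases mul_eq_zero.1 h5 with h6 | h6
          · exact absurd (sub_eq_zero.1 h6) hba
          · exact sub_eq_zero.1 h6
      · rw [smul_eq_mul]
        exact Nat.mul_le_mul_right _ (card_le_card (erase_subset _ _))
  refine (sum_le_sum h2).trans ?_
  rw [sum_const, smul_eq_mul]
  apply le_of_eq
  ring

/-- Chebyshev's inequality: few points `x` see less than half of the expected share `|A| / M` of `A`
in the class `κ`. -/
theorem card_bad_le {F : Type} [Field F] [Fintype F] {M r : ℕ} (hr : 0 < r)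
    (hM : 0 < M) (hq : Fintype.card F = M * r + 1) (A : Finset F) {κ : F} (hκ : κ ^ M = 1)
    (B : Finset F) (hB : ∀ x ∈ B, 2 * M * (nbr r A κ x).card < A.card) :
    B.card * A.card ≤ 8 * M ^ 2 * Fintype.card F := by
  classical
  set Q : Finset F := univ.filter fun y => y ^ M = 1 with hQdef
  have hQ : ∀ y, y ∈ Q ↔ y ^ M = 1 := by simp [hQdef]
  have hQc : (Q.card : ℝ) ≤ M := by exact_mod_cast card_fiber_le hM (1 : F)
  have e1 := sum_nbr_card hq hQ A
  have e2 := sum_nbr_card_sq hr hq hQ A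
  have e1' : ∑ x : F, ∑ κ ∈ Q, ((nbr r A κ x).card : ℝ) = A.card * (M * r) := by
    exact_mod_cast e1
  have e2' : ∑ x : F, ∑ κ ∈ Q, ((nbr r A κ x).card : ℝ) ^ 2 ≤
      A.card * (M * r) + (A.card : ℝ) ^ 2 * r := by exact_mod_cast e2
  have hMr : (0 : ℝ) < M := by exact_mod_cast hM
  set α : ℝ := (A.card : ℝ) with hα
  set q : ℝ := (Fintype.card F : ℝ) with hqdef
  have hqr : q = M * r + 1 := by rw [hqdef, hq]; push_cast; ring
  have hα0 : 0 ≤ α := by positivity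
  have hαq : α ≤ q := by
    rw [hα, hqdef]; exact_mod_cast card_le_univ A
  have hr0 : (1 : ℝ) ≤ r := by exact_mod_cast hr
  -- the total variance of the neighbourhood sizes
  have hvar : ∑ x : F, ∑ κ ∈ Q, (((nbr r A κ x).card : ℝ) - α / M) ^ 2 ≤ 2 * q * α := by
    have : ∑ x : F, ∑ κ ∈ Q, (((nbr r A κ x).card : ℝ) - α / M) ^ 2 =
        ∑ x : F, ∑ κ ∈ Q, ((nbr r A κ x).card : ℝ) ^ 2
          - 2 * (α / M) * ∑ x : F, ∑ κ ∈ Q, ((nbr r A κ x).card : ℝ)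
          + q * (Q.card * (α / M) ^ 2) := by
      have h3 : q * (Q.card * (α / M) ^ 2) = ∑ x : F, ∑ κ ∈ Q, (α / M) ^ 2 := by
        simp [hqdef]
      rw [h3, mul_sum, ← sum_sub_distrib, ← sum_add_distrib]
      refine sum_congr rfl fun x _ => ?_
      rw [mul_sum, ← sum_sub_distrib, ← sum_add_distrib]
      exact sum_congr rfl fun κ _ => by ring
    rw [this, e1']
    have h4 : q * (Q.card * (α / M) ^ 2) ≤ q * (α ^ 2 / M) := by
      have : (Q.card : ℝ) * (α / M) ^ 2 ≤ M * (α / M) ^ 2 := by gcongr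
      have h5 : (M : ℝ) * (α / M) ^ 2 = α ^ 2 / M := by field_simp
      rw [h5] at this
      exact mul_le_mul_of_nonneg_left this (hα0.trans hαq)
    have h5 : 2 * (α / M) * (α * (M * r)) = 2 * α ^ 2 * r := by field_simp
    have h6 : q * (α ^ 2 / M) = α ^ 2 * r + α ^ 2 / M := by rw [hqr]; field_simp
    have h7 : α ^ 2 / M ≤ α ^ 2 := by
      apply div_le_self (by positivity); exact_mod_cast hM
    nlinarith
  -- at a point of `B` the deviation from the mean is at least half of the mean
  have hlow : (B.card : ℝ) * (α / (2 * M)) ^ 2 ≤ 2 * q * α := by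
    refine le_trans ?_ hvar
    calc (B.card : ℝ) * (α / (2 * M)) ^ 2 = ∑ x ∈ B, (α / (2 * M)) ^ 2 := by simp
      _ ≤ ∑ x ∈ B, (((nbr r A κ x).card : ℝ) - α / M) ^ 2 := by
        refine sum_le_sum fun x hx => ?_
        have h1 : 2 * M * ((nbr r A κ x).card : ℝ) < α := by rw [hα]; exact_mod_cast hB x hx
        have h2 : ((nbr r A κ x).card : ℝ) ≤ α / (2 * M) := by
          rw [le_div_iff₀ (by positivity)]; linarith
        have h3 : α / M = α / (2 * M) + α / (2 * M) := by field_simp; norm_num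
        have h4 : 0 ≤ α / (2 * M) := by positivity
        nlinarith
      _ ≤ ∑ x : F, (((nbr r A κ x).card : ℝ) - α / M) ^ 2 :=
        sum_le_sum_of_subset_of_nonneg (subset_univ _) fun _ _ _ => by positivity
      _ ≤ ∑ x : F, ∑ κ ∈ Q, (((nbr r A κ x).card : ℝ) - α / M) ^ 2 := by
        refine sum_le_sum fun x _ => ?_
        exact single_le_sum (f := fun κ => (((nbr r A κ x).card : ℝ) - α / M) ^ 2)
          (fun _ _ => by positivity) ((hQ κ).2 hκ)
  have hfin : (B.card : ℝ) * α ≤ 8 * M ^ 2 * q := by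
    rcases hα0.eq_or_lt with h0 | h0
    · rw [← h0]; rw [mul_zero]; have : 0 ≤ q := hα0.trans hαq; positivity
    · have h1 : (B.card : ℝ) * (α / (2 * M)) ^ 2 = (B.card * α) * α / (4 * M ^ 2) := by
        field_simp; norm_num
      rw [h1, div_le_iff₀ (by positivity)] at hlow
      have : (B.card * α) * α ≤ (8 * M ^ 2 * q) * α := by linarith
      exact le_of_mul_le_mul_right this h0
  rw [hα, hqdef] at hfin
  exact_mod_cast hfin

/-- In a large field one can choose points `x i` from sets `A i` of density at least `1 / c` so that all
differences `x j - x i`, `i < j`, have prescribed classes `κ i j`. The first point is chosen so that it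
sees a share `1 / (2 M)` of each later `A j` in the right class; induction, with `c` replaced by
`2 * M * c`, applies to these parts. It matters that `q₀` depends only on `M`, `n` and `c`. -/
theorem exists_embedding (M : ℕ) (hM : 0 < M) (n : ℕ) : ∀ c : ℕ, 0 < c → ∃ q₀ : ℕ,
    ∀ (F : Type) [Field F] [Fintype F] (r : ℕ), 0 < r → Fintype.card F = M * r + 1 →
      q₀ ≤ Fintype.card F → ∀ A : Fin n → Finset F,
      (∀ i, Fintype.card F ≤ c * (A i).card) → ∀ κ : Fin n → Fin n → F, (∀ i j, κ i j ^ M = 1) →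
      ∃ x : Fin n → F, (∀ i, x i ∈ A i) ∧ ∀ i j, i < j → (x j - x i) ^ r = κ i j := by
  classical
  induction n with
  | zero => exact fun c _ => ⟨0, fun F _ _ r _ _ _ A _ κ _ => ⟨Fin.elim0, fun i => i.elim0,
      fun i => i.elim0⟩⟩
  | succ n ih =>
    intro c hc
    obtain ⟨q₁, hq₁⟩ := ih (2 * M * c) (by positivity)
    refine ⟨max q₁ (8 * M ^ 2 * c * n * c + 1), ?_⟩
    intro F _ _ r hr hq hqq A hA κ hκ
    set q := Fintype.card F with hqdef
    let B : Fin n → Finset F := fun j =>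
      univ.filter fun x => 2 * M * (nbr r (A j.succ) (κ 0 j.succ) x).card < (A j.succ).card
    have hq0 : 0 < q := Fintype.card_pos
    have hBc : ∀ j, (B j).card ≤ 8 * M ^ 2 * c := by
      intro j
      have h1 := card_bad_le hr hM hq (A j.succ) (hκ 0 j.succ) (B j)
        fun x hx => (mem_filter.1 hx).2
      have h2 := hA j.succ
      refine Nat.le_of_mul_le_mul_right ?_ hq0
      calc (B j).card * q ≤ (B j).card * (c * (A j.succ).card) := Nat.mul_le_mul_left _ h2
        _ = c * ((B j).card * (A j.succ).card) := by ring
        _ ≤ c * (8 * M ^ 2 * q) := Nat.mul_le_mul_left _ h1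
        _ = 8 * M ^ 2 * c * q := by ring
    -- `B j` consists of the points that see too few elements of `A j.succ`
    obtain ⟨x₀, hx₀, hx₀B⟩ : ∃ x₀ ∈ A 0, x₀ ∉ univ.biUnion B := by
      apply exists_mem_notMem_of_card_lt_card
      have h1 : (univ.biUnion B).card ≤ 8 * M ^ 2 * c * n := by
        refine (card_biUnion_le).trans ((sum_le_card_nsmul _ _ _ fun j _ => hBc j).trans ?_)
        simp [mul_comm]
      have h2 := hA 0
      by_contra hlt
      have h3 : c * (A 0).card ≤ c * (8 * M ^ 2 * c * n) :=
        Nat.mul_le_mul_left _ ((not_lt.1 hlt).trans h1)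
      have h4 := (le_max_right _ _).trans hqq
      have h5 : c * (8 * M ^ 2 * c * n) = 8 * M ^ 2 * c * n * c := by ring
      omega
    obtain ⟨x, hx, hxκ⟩ := hq₁ F r hr hq ((le_max_left _ _).trans hqq)
      (fun j => nbr r (A j.succ) (κ 0 j.succ) x₀) (by
        intro j
        have h1 : x₀ ∉ B j := fun h => hx₀B (mem_biUnion.2 ⟨j, mem_univ _, h⟩)
        have h2 := not_lt.1 fun h => h1 (mem_filter.2 ⟨mem_univ _, h⟩)
        calc q ≤ c * (A j.succ).card := hA _
          _ ≤ c * (2 * M * _) := Nat.mul_le_mul_left _ h2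
          _ = _ := by ring)
      (fun i j => κ i.succ j.succ) fun i j => hκ _ _
    refine ⟨Fin.cons x₀ x, ?_, ?_⟩
    · intro i
      refine Fin.cases hx₀ (fun j => ?_) i
      exact (mem_filter.1 (hx j)).1
    · intro i j hij
      obtain ⟨j, rfl⟩ := Fin.exists_succ_eq.2 (Fin.ne_zero_of_lt hij)
      revert hij
      refine Fin.cases ?_ (fun i => ?_) i
      · intro _
        exact (mem_filter.1 (hx j)).2
      · intro hij
        simpa using hxκ i j (Fin.succ_lt_succ_iff.1 hij)

end Cyclotomy

/-! ### Difference families in a finite field -/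

section Families

open Finset

/-- If `σ` is an involution of `S` and `f x ≠ f (σ x)` on `S`, the condition `f x < f (σ x)` selects one
element of each pair `{x, σ x}`. -/
theorem two_mul_card_half {α : Type} (S : Finset α) (σ : α → α) (hσ : ∀ x ∈ S, σ x ∈ S)
    (hσσ : ∀ x ∈ S, σ (σ x) = x) (f : α → ℕ) (hf : ∀ x ∈ S, f x ≠ f (σ x)) :
    2 * (S.filter fun x => f x < f (σ x)).card = S.card := by
  classical
  rw [← card_filter_add_card_filter_not (s := S) (fun x => f x < f (σ x)), two_mul]
  congr 1
  refine card_bij (fun x _ => σ x) ?_ ?_ ?_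
  · intro x hx
    obtain ⟨h1, h2⟩ := mem_filter.1 hx
    refine mem_filter.2 ⟨hσ x h1, ?_⟩
    rw [hσσ x h1]
    omega
  · intro x hx y hy h
    rw [← hσσ x (mem_filter.1 hx).1, ← hσσ y (mem_filter.1 hy).1, h]
  · intro y hy
    obtain ⟨h1, h2⟩ := mem_filter.1 hy
    refine ⟨σ y, mem_filter.2 ⟨hσ y h1, ?_⟩, hσσ y h1⟩
    rw [hσσ y h1]
    have := hf y h1
    omega

/-- A set `U` closed under negation, of size `t * k * (k - 1)`, can be written as the set of values of
`t` antisymmetric `k × k` matrices, each value occurring once off the diagonals. -/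
theorem exists_colouring {F : Type} [Field F] [Fintype F] (h2 : (2 : F) ≠ 0) (k : ℕ)
    (U : Finset F) (h0 : (0 : F) ∉ U) (hneg : ∀ u ∈ U, -u ∈ U) (hdvd : k * (k - 1) ∣ U.card) :
    ∃ t : ℕ, ∃ Φ : Fin t → Fin k → Fin k → F,
      (∀ τ i j, i < j → Φ τ i j ∈ U) ∧
      (∀ τ i j, i ≠ j → Φ τ j i = -Φ τ i j) ∧
      (∀ u ∈ U, ∃ τ i j, i ≠ j ∧ Φ τ i j = u) ∧
      (∀ τ i j τ' i' j', i ≠ j → i' ≠ j' → Φ τ i j = Φ τ' i' j' → τ = τ' ∧ i = i' ∧ j = j') := by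
  classical
  obtain ⟨t, ht⟩ := hdvd
  let f : F → ℕ := fun x => Fintype.equivFin F x
  have hfinj : Function.Injective f := Fin.val_injective.comp (Fintype.equivFin F).injective
  have hnn : ∀ u ∈ U, u ≠ -u := by
    intro u hu h
    have h1 : 2 * u = 0 := by linear_combination h
    rcases mul_eq_zero.1 h1 with h3 | h3
    · exact h2 h3
    · exact h0 (h3 ▸ hu)
  -- `H` contains one element of each pair `{u, -u}`
  set H := U.filter fun u => f u < f (-u) with hH
  have hHc : 2 * H.card = U.card := two_mul_card_half U (fun u => -u) hneg (fun u _ => neg_neg u) f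
    fun u hu h => hnn u hu (hfinj h)
  -- `P` is the set of pairs `i < j`
  set P := (univ : Finset (Fin k)).offDiag.filter fun p => (p.1 : ℕ) < p.2 with hP
  have hPc : 2 * P.card = k * k - k := by
    have := two_mul_card_half (univ : Finset (Fin k)).offDiag Prod.swap
      (fun p hp => by simp only [mem_offDiag, mem_univ, true_and] at hp ⊢; exact hp.symm)
      (fun p _ => Prod.swap_swap p) (fun p => (p.1 : ℕ))
      (fun p hp h => by
        simp only [mem_offDiag, mem_univ, true_and] at hp
        exact hp (Fin.ext h))
    rw [offDiag_card, card_univ, Fintype.card_fin] at this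
    exact this
  have hcard : Fintype.card (Fin t × P) = Fintype.card H := by
    rw [Fintype.card_prod, Fintype.card_fin, Fintype.card_coe, Fintype.card_coe]
    have h1 : k * (k - 1) = k * k - k := by rw [Nat.mul_sub, mul_one]
    rw [h1, ← hPc, ← hHc] at ht
    have : 2 * H.card = 2 * (t * P.card) := by rw [ht]; ring
    omega
  let ψ : Fin t × P ≃ H := Fintype.equivOfCardEq hcard
  have hPm : ∀ i j : Fin k, i < j → (i, j) ∈ P := fun i j hij => by
    simp [hP, hij.ne, hij]
  have hHneg : ∀ u ∈ H, -u ∉ H := by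
    intro u hu h
    have h1 := (mem_filter.1 hu).2
    have h3 := (mem_filter.1 h).2
    rw [neg_neg] at h3
    omega
  let Φ : Fin t → Fin k → Fin k → F := fun τ i j =>
    if hij : i < j then (ψ (τ, ⟨(i, j), hPm i j hij⟩) : F)
    else if hji : j < i then -(ψ (τ, ⟨(j, i), hPm j i hji⟩) : F) else 0
  have hlt : ∀ τ i j (hij : i < j), Φ τ i j = (ψ (τ, ⟨(i, j), hPm i j hij⟩) : F) :=
    fun τ i j hij => dif_pos hij
  have hgt : ∀ τ i j (hij : i < j), Φ τ j i = -(ψ (τ, ⟨(i, j), hPm i j hij⟩) : F) :=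
    fun τ i j hij => by
      simp only [Φ]
      rw [dif_neg hij.not_gt, dif_pos hij]
  have hanti : ∀ τ i j, i ≠ j → Φ τ j i = -Φ τ i j := by
    intro τ i j hij
    rcases hij.lt_or_gt with h | h
    · rw [hlt τ i j h, hgt τ i j h]
    · rw [hlt τ j i h, hgt τ j i h, neg_neg]
  have hltH : ∀ τ i j, i < j → Φ τ i j ∈ H := fun τ i j hij => by
    rw [hlt τ i j hij]; exact Subtype.mem _
  have hsurj : ∀ u ∈ H, ∃ τ i j, i ≠ j ∧ Φ τ i j = u := by
    intro u hu
    obtain ⟨⟨τ, ⟨⟨i, j⟩, hp⟩⟩, h⟩ := ψ.surjective ⟨u, hu⟩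
    have hij : i < j := (mem_filter.1 hp).2
    refine ⟨τ, i, j, hij.ne, ?_⟩
    rw [hlt τ i j hij, h]
  have hinj : ∀ τ i j τ' i' j', i < j → i' < j' → Φ τ i j = Φ τ' i' j' →
      τ = τ' ∧ i = i' ∧ j = j' := by
    intro τ i j τ' i' j' hij hij' h
    rw [hlt τ i j hij, hlt τ' i' j' hij'] at h
    have := ψ.injective (Subtype.ext h)
    simpa using this
  refine ⟨t, Φ, fun τ i j hij => (mem_filter.1 (hltH τ i j hij)).1, hanti, ?_, ?_⟩
  · intro u hu
    rcases lt_or_ge (f u) (f (-u)) with h | h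
    · exact hsurj u (mem_filter.2 ⟨hu, h⟩)
    · have h1 : f (-u) < f (- -u) := by
        rw [neg_neg]
        exact lt_of_le_of_ne h fun h3 => hnn u hu (hfinj h3).symm
      obtain ⟨τ, i, j, hij, h3⟩ := hsurj (-u) (mem_filter.2 ⟨hneg u hu, h1⟩)
      exact ⟨τ, j, i, hij.symm, by rw [hanti τ i j hij, h3, neg_neg]⟩
  · intro τ i j τ' i' j' hij hij' h
    rcases hij.lt_or_gt with h1 | h1 <;> rcases hij'.lt_or_gt with h3 | h3
    · exact hinj _ _ _ _ _ _ h1 h3 h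
    · rw [hanti τ' j' i' hij'.symm] at h
      exact absurd (h ▸ hltH τ i j h1) (hHneg _ (hltH τ' j' i' h3))
    · rw [hanti τ j i hij.symm] at h
      exact absurd (h ▸ hltH τ' i' j' h3) (hHneg _ (hltH τ j i h1))
    · rw [hanti τ j i hij.symm, hanti τ' j' i' hij'.symm, neg_inj] at h
      obtain ⟨a, b, c⟩ := hinj _ _ _ _ _ _ h1 h3 h
      exact ⟨a, c, b⟩

/-- In a large field, a union of cyclotomic classes that is closed under negation and consists of a
multiple of `k * (k - 1)` classes is the set of differences of a difference family with blocks of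
size `k`: its base blocks are `k`-sets whose differences represent each class once, and the family
consists of their multiples by `r`-th roots of unity. -/
theorem exists_diffFamily (M : ℕ) (hM : 0 < M) (k : ℕ) : ∃ q₀ : ℕ,
    ∀ (F : Type) [Field F] [Fintype F] (r : ℕ), Odd r → Fintype.card F = M * r + 1 →
      q₀ ≤ Fintype.card F → (2 : F) ≠ 0 → ∀ U : Finset F, (∀ u ∈ U, u ^ M = 1) →
      (∀ u ∈ U, -u ∈ U) → k * (k - 1) ∣ U.card →
      ∃ 𝓕 : Set (Finset F), IsDiffFamily k 𝓕 {x | x ≠ 0 ∧ x ^ r ∈ U} := by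
  classical
  obtain ⟨q₀, hq₀⟩ := exists_embedding M hM k 1 one_pos
  refine ⟨q₀, fun F _ _ r hr hq hqq h2 U hU hneg hdvd => ?_⟩
  have hr0 : 0 < r := hr.pos
  have h0 : (0 : F) ∉ U := fun h => by
    have := hU 0 h
    rw [zero_pow hM.ne'] at this
    exact zero_ne_one this
  obtain ⟨t, Φ, hΦU, hanti, hsurj, hinj⟩ := exists_colouring h2 k U h0 hneg hdvd
  have hex : ∀ τ, ∃ x : Fin k → F, ∀ i j, i < j → (x j - x i) ^ r = Φ τ i j := by
    intro τ
    obtain ⟨x, -, hx⟩ := hq₀ F r hr0 hq hqq (fun _ => univ) (by simp [card_univ])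
      (fun i j => if i < j then Φ τ i j else 1) (by
        intro i j
        split_ifs with hij
        · exact hU _ (hΦU τ i j hij)
        · exact one_pow _)
    exact ⟨x, fun i j hij => by rw [hx i j hij, if_pos hij]⟩
  choose x hx using hex
  have hxr : ∀ τ i j, i ≠ j → (x τ j - x τ i) ^ r = Φ τ i j := by
    intro τ i j hij
    rcases hij.lt_or_gt with h | h
    · exact hx τ i j h
    · rw [hanti τ j i hij.symm, ← hx τ j i h, ← hr.neg_pow, neg_sub]
  have hΦ : ∀ τ i j, i ≠ j → Φ τ i j ∈ U := by
    intro τ i j hij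
    rcases hij.lt_or_gt with h | h
    · exact hΦU τ i j h
    · rw [hanti τ j i hij.symm]; exact hneg _ (hΦU τ j i h)
  have hne : ∀ τ i j, i ≠ j → x τ j - x τ i ≠ 0 := by
    intro τ i j hij h
    have h1 := hxr τ i j hij
    rw [h, zero_pow hr0.ne'] at h1
    exact h0 (h1 ▸ hΦ τ i j hij)
  have hη0 : ∀ η : F, η ^ r = 1 → η ≠ 0 := by
    rintro η h rfl
    rw [zero_pow hr0.ne'] at h
    exact zero_ne_one h
  let b : F → Fin t → Finset F := fun η τ => univ.image fun i => η * x τ i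
  have hb : ∀ η τ y, y ∈ b η τ ↔ ∃ i, η * x τ i = y := by simp [b]
  refine ⟨{A | ∃ η : F, η ^ r = 1 ∧ ∃ τ, A = b η τ}, ?_, ?_, ?_, ?_⟩
  · rintro A ⟨η, hη, τ, rfl⟩
    rw [card_image_of_injective, card_univ, Fintype.card_fin]
    intro i j hij
    by_contra hne'
    exact hne τ i j hne' (by
      rw [sub_eq_zero]; exact (mul_left_cancel₀ (hη0 η hη) hij).symm)
  · rintro d ⟨hd, hdU⟩
    obtain ⟨τ, i, j, hij, h⟩ := hsurj _ hdU
    have hn := hne τ i j hij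
    refine ⟨_, ⟨d / (x τ j - x τ i), ?_, τ, rfl⟩, _, (hb _ _ _).2 ⟨j, rfl⟩, _,
      (hb _ _ _).2 ⟨i, rfl⟩, ?_⟩
    · rw [div_pow, hxr τ i j hij, h, div_self (pow_ne_zero _ hd)]
    · rw [← mul_sub, div_mul_cancel₀ _ hn]
  · rintro A ⟨η, hη, τ, rfl⟩ y hy y' hy' hyy
    obtain ⟨j, rfl⟩ := (hb _ _ _).1 hy
    obtain ⟨i, rfl⟩ := (hb _ _ _).1 hy'
    have hij : i ≠ j := by rintro rfl; exact hyy rfl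
    refine ⟨sub_ne_zero.2 hyy, ?_⟩
    rw [← mul_sub, mul_pow, hη, one_mul, hxr τ i j hij]
    exact hΦ τ i j hij
  · rintro A ⟨η, hη, τ, rfl⟩ A' ⟨η', hη', τ', rfl⟩ y hy w hw y' hy' w' hw' hne1 heq
    obtain ⟨j, rfl⟩ := (hb _ _ _).1 hy
    obtain ⟨i, rfl⟩ := (hb _ _ _).1 hw
    obtain ⟨j', rfl⟩ := (hb _ _ _).1 hy'
    obtain ⟨i', rfl⟩ := (hb _ _ _).1 hw'
    have hij : i ≠ j := by rintro rfl; exact hne1 rfl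
    have hij' : i' ≠ j' := by
      rintro rfl
      rw [sub_self, sub_eq_zero] at heq
      exact hne1 heq
    rw [← mul_sub, ← mul_sub] at heq
    have h3 := congrArg (· ^ r) heq
    simp only [mul_pow, hη, hη', one_mul] at h3
    rw [hxr τ i j hij, hxr τ' i' j' hij'] at h3
    obtain ⟨rfl, rfl, rfl⟩ := hinj _ _ _ _ _ _ hij hij' h3
    have h4 := mul_right_cancel₀ (hne τ i j hij) heq
    subst h4
    exact ⟨rfl, rfl⟩

end Families

/-! ### Existence of the arithmetic data -/

section Existence

open Finset

/-- The elements `z j` can be chosen from any large enough sets of nonzero elements so as to satisfy the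
`slope` condition: given `z l ≠ 0`, the polynomial `(X - z l) ^ e - (X + z l) ^ e` is nonzero, because its
value at `z l` is `-(2 * z l) ^ e`. -/
theorem exists_slopes {F : Type} [Field F] (h2 : (2 : F) ≠ 0) {e : ℕ} (he : Even e) (he0 : e ≠ 0)
    (n : ℕ) : ∀ C : Fin n → Finset F, (∀ j, e * n < (C j).card) → (∀ j, ∀ x ∈ C j, x ≠ 0) →
      ∃ z : Fin n → F, (∀ j, z j ∈ C j) ∧ ∀ j l, j ≠ l → (z j - z l) ^ e ≠ (z j + z l) ^ e := by
  classical
  induction n with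
  | zero => exact fun C _ _ => ⟨Fin.elim0, fun j => j.elim0, fun j => j.elim0⟩
  | succ n ih =>
    intro C hC hC0
    obtain ⟨z, hz, hzs⟩ := ih (fun j => C j.succ)
      (fun j => lt_of_le_of_lt (Nat.mul_le_mul_left _ n.le_succ) (hC j.succ))
      (fun j => hC0 j.succ)
    let P : Fin n → Polynomial F := fun l =>
      (Polynomial.X - Polynomial.C (z l)) ^ e - (Polynomial.X + Polynomial.C (z l)) ^ e
    have hP : ∀ l x, (P l).eval x = (x - z l) ^ e - (x + z l) ^ e := fun l x => by simp [P]
    obtain ⟨x₀, hx₀, hx₀B⟩ : ∃ x₀ ∈ C 0, x₀ ∉ univ.biUnion fun l => (P l).roots.toFinset := by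
      apply exists_mem_notMem_of_card_lt_card
      have h1 : (univ.biUnion fun l => (P l).roots.toFinset).card ≤ n * e := by
        refine card_biUnion_le.trans ((sum_le_card_nsmul _ _ e fun l _ => ?_).trans (by simp))
        refine (Multiset.toFinset_card_le _).trans ((Polynomial.card_roots' _).trans ?_)
        refine (Polynomial.natDegree_sub_le _ _).trans (max_le ?_ ?_)
        · refine Polynomial.natDegree_pow_le.trans ?_
          rw [Polynomial.natDegree_X_sub_C, mul_one]
        · refine Polynomial.natDegree_pow_le.trans ?_
          rw [Polynomial.natDegree_X_add_C, mul_one]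
      have h3 := hC 0
      rw [Nat.mul_succ] at h3
      rw [mul_comm] at h1
      omega
    have hx : ∀ l, (x₀ - z l) ^ e ≠ (x₀ + z l) ^ e := by
      intro l hl
      refine hx₀B (mem_biUnion.2 ⟨l, mem_univ _, ?_⟩)
      rw [Multiset.mem_toFinset, Polynomial.mem_roots, Polynomial.IsRoot, hP, hl, sub_self]
      intro h0
      have h3 := hP l (z l)
      rw [h0, Polynomial.eval_zero, sub_self, zero_pow he0, zero_sub, zero_eq_neg, ← two_mul] at h3
      exact pow_ne_zero _ (mul_ne_zero h2 (hC0 _ _ (hz l))) h3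
    -- since `e` is even, the condition is symmetric in `j` and `l`
    refine ⟨Fin.cons x₀ z, ?_, ?_⟩
    · intro j
      exact Fin.cases hx₀ (fun l => hz l) j
    · intro j l
      refine Fin.cases ?_ (fun j => ?_) j <;> refine Fin.cases ?_ (fun l => ?_) l
      · exact fun h => absurd rfl h
      · intro _
        simpa using hx l
      · intro _
        simp only [Fin.cons_succ, Fin.cons_zero]
        rw [← he.neg_pow, neg_sub, add_comm]
        exact hx j
      · intro hjl
        simpa using hzs j l fun h => hjl (by rw [h])

end Existence

section Existence

open Finset

/-- Every sufficiently large finite field with `e * h * m * (1 + e * h * t) + 1` elements, where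
`m = 2 * h * (2 * h - 1)`, carries the arithmetic data. -/
theorem nonempty_cycloData (e h : ℕ) (he : Even e) (he0 : 0 < e) (hh : 0 < h) : ∃ q₀ : ℕ,
    ∀ (F : Type) [Field F] [Fintype F] (t : ℕ),
      Fintype.card F = e * h * (2 * h * (2 * h - 1)) * (1 + e * h * t) + 1 →
      q₀ ≤ Fintype.card F → Nonempty (CycloData F e h) := by
  classical
  obtain ⟨m, hm⟩ : ∃ m, m = 2 * h * (2 * h - 1) := ⟨_, rfl⟩
  obtain ⟨M, hM⟩ : ∃ M, M = e * h * m := ⟨_, rfl⟩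
  have hm0 : 0 < m := by
    rw [hm]; exact Nat.mul_pos (by omega) (by omega)
  have hM0 : 0 < M := by rw [hM]; positivity
  obtain ⟨q₁, hq₁⟩ := exists_diffFamily M hM0 (2 * h)
  refine ⟨max q₁ (M + 2), fun F _ _ t hq hqq => ?_⟩
  obtain ⟨r, hr⟩ : ∃ r, r = 1 + e * h * t := ⟨_, rfl⟩
  rw [← hm, ← hM, ← hr] at hq
  have hqq1 := (le_max_left _ _).trans hqq
  have hqq2 := (le_max_right _ _).trans hqq
  have hrodd : Odd r := by
    rw [hr]
    exact odd_one.add_even ((he.mul_right h).mul_right t)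
  have hr0 : 0 < r := hrodd.pos
  have hreh : e * h < r := by
    rcases Nat.eq_zero_or_pos t with h0 | h0
    · rw [h0, mul_zero, add_zero] at hr
      rw [hr] at hq
      omega
    · have := Nat.le_mul_of_pos_right (e * h) h0
      omega
  obtain ⟨e', he'⟩ := he.two_dvd
  obtain ⟨M', hM'⟩ : ∃ M', M' = e' * h * m := ⟨_, rfl⟩
  have hMM' : M = 2 * M' := by rw [hM, hM', he']; ring
  have hmM' : m ≤ M' := by
    rw [hM']
    refine Nat.le_mul_of_pos_left _ (Nat.mul_pos ?_ hh)
    omega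
  have h2 : (2 : F) ≠ 0 := by
    intro h
    have h1 : ringChar F = 2 := by
      have h3 : ringChar F ∣ 2 := ringChar.dvd (by exact_mod_cast h)
      rcases (Nat.dvd_prime Nat.prime_two).1 h3 with h4 | h4
      · exact absurd h4 (CharP.ringChar_ne_one)
      · exact h4
    have h3 := FiniteField.even_card_of_char_two h1
    rw [hq, hMM', mul_assoc] at h3
    omega
  -- a generator of the multiplicative group
  obtain ⟨g, hg⟩ : ∃ g : F, IsPrimitiveRoot g (M * r) := by
    obtain ⟨u, hu⟩ := IsCyclic.exists_generator (α := Fˣ)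
    refine ⟨u, ?_⟩
    rw [IsPrimitiveRoot.coe_units_iff, IsPrimitiveRoot.iff_orderOf,
      orderOf_eq_card_of_forall_mem_zpowers hu, Nat.card_units, Nat.card_eq_fintype_card, hq,
      Nat.add_sub_cancel]
  have hMr0 : 0 < M * r := by positivity
  have hfermat : ∀ x : F, x ≠ 0 → x ^ (M * r) = 1 := by
    intro x hx
    have := FiniteField.pow_card_sub_one_eq_one x hx
    rwa [hq, Nat.add_sub_cancel] at this
  have hg0 : g ≠ 0 := hg.ne_zero hMr0.ne'
  obtain ⟨γ, hγ⟩ : ∃ γ, γ = g ^ r := ⟨_, rfl⟩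
  have hγp : IsPrimitiveRoot γ M := by
    rw [hγ]
    exact hg.pow hMr0 (mul_comm _ _)
  have hγ0 : γ ≠ 0 := hγp.ne_zero hM0.ne'
  have hγneg : γ ^ M' = -1 := by
    have h1 : (γ ^ M') ^ 2 = 1 := by rw [← pow_mul, mul_comm, ← hMM', hγp.pow_eq_one]
    rcases (mul_self_eq_one_iff.1 ((sq (γ ^ M')).symm.trans h1)) with h3 | h3
    · exact absurd h3 (hγp.pow_ne_one_of_pos_of_lt (by omega) (by omega : M' < M))
    · exact h3
  -- `r` is congruent to `1` modulo `e`
  have hcr : ∀ c : F, c ^ e = 1 → c ^ r = c := by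
    intro c hc
    rw [hr, pow_add, pow_one, mul_assoc, pow_mul, hc, one_pow, mul_one]
  -- the elements `z j`
  obtain ⟨z, hz, hslope⟩ := exists_slopes h2 he he0.ne' h
    (fun j => univ.filter fun x : F => (2 * x) ^ r = γ ^ (m * j)) (by
      intro j
      refine lt_of_lt_of_le hreh ?_
      have hη : IsPrimitiveRoot (g ^ M) r := hg.pow hMr0 rfl
      conv_lhs => rw [← card_range r]
      refine card_le_card_of_injOn (fun s => g ^ (m * (j : ℕ)) * (g ^ M) ^ s / 2) ?_ ?_
      · intro s _
        refine mem_filter.2 ⟨mem_univ _, ?_⟩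
        rw [mul_div_cancel₀ _ h2, mul_pow, ← pow_mul, ← pow_mul, ← pow_mul, hγ, ← pow_mul,
          mul_comm (m * (j : ℕ)) r]
        have : M * (s * r) = M * r * s := by ring
        rw [this, pow_mul g (M * r), hg.pow_eq_one, one_pow, mul_one]
      · intro s hs s' hs' hss
        have h1 : (g ^ M) ^ s = (g ^ M) ^ s' := by
          have h3 := (div_left_inj' h2).1 hss
          exact mul_left_cancel₀ (pow_ne_zero _ hg0) h3
        exact hη.pow_inj (by simpa using hs) (by simpa using hs') h1)
    (by
      intro j x hx h0
      have := (mem_filter.1 hx).2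
      rw [h0, mul_zero, zero_pow hr0.ne'] at this
      exact pow_ne_zero _ hγ0 this.symm)
  have hzr : ∀ j, (2 * z j) ^ r = γ ^ (m * (j : ℕ)) := fun j => (mem_filter.1 (hz j)).2
  have hz0 : ∀ j, z j ≠ 0 := by
    intro j h0
    have := hzr j
    rw [h0, mul_zero, zero_pow hr0.ne'] at this
    exact pow_ne_zero _ hγ0 this.symm
  -- `E` will be the set of elements whose `r`-th power lies in `T`
  let T : Finset F := (range m).image fun i => γ ^ i
  have hT : ∀ y, y ∈ T ↔ ∃ i, i < m ∧ γ ^ i = y := by simp [T]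
  have hTc : T.card = m := by
    rw [card_image_of_injOn, card_range]
    intro i hi i' hi' h1
    simp only [coe_range, Set.mem_Iio] at hi hi'
    exact hγp.pow_inj (by omega) (by omega) h1
  let U : Finset F := univ.filter fun y => y ^ M = 1
  have hU : ∀ y, y ∈ U ↔ y ^ M = 1 := by simp [U]
  have hUc : U.card = M := by
    rw [← hγp.card_nthRootsFinset]
    congr 1
    ext y
    rw [hU, Polynomial.mem_nthRootsFinset hM0]
  have hUneg : ∀ u ∈ U, -u ∈ U := by
    intro u hu
    rw [hU] at hu ⊢
    rw [Even.neg_pow ⟨M', by omega⟩, hu]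
  have hxU : ∀ x : F, x ≠ 0 → x ^ r ∈ U := by
    intro x hx
    rw [hU, ← pow_mul, mul_comm, hfermat x hx]
  have hmU : m ∣ U.card := by rw [hUc, hM]; exact dvd_mul_left _ _
  let U₂ : Finset F := U.filter fun y => y ∉ T ∧ -y ∉ T
  have hU₂ : ∀ y, y ∈ U₂ ↔ y ∈ U ∧ y ∉ T ∧ -y ∉ T := by simp [U₂]
  have hTU : T ⊆ U := by
    intro y hy
    obtain ⟨i, -, rfl⟩ := (hT y).1 hy
    rw [hU, ← pow_mul, mul_comm, pow_mul, hγp.pow_eq_one, one_pow]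
  have hmU₂ : m ∣ U₂.card := by
    have h1 : U₂ = U \ (T ∪ T.image fun y => -y) := by
      ext y
      simp only [hU₂, mem_sdiff, mem_union, mem_image, not_or, not_exists, not_and]
      refine and_congr_right fun _ => and_congr_right fun _ => ?_
      constructor
      · rintro h x hx rfl
        exact h (by rwa [neg_neg])
      · intro h hy
        exact h _ hy (neg_neg y)
    have h3 : Disjoint T (T.image fun y => -y) := by
      rw [disjoint_left]
      intro y hy hy'
      obtain ⟨i, hi, rfl⟩ := (hT y).1 hy
      obtain ⟨x, hx, h4⟩ := mem_image.1 hy'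
      obtain ⟨i', hi', rfl⟩ := (hT x).1 hx
      have h5 : γ ^ (M' + i') = γ ^ i := by rw [pow_add, hγneg, ← h4]; ring
      have := hγp.pow_inj (by omega) (by omega) h5
      omega
    have h4 : (T ∪ T.image fun y => -y) ⊆ U := by
      refine union_subset hTU fun y hy => ?_
      obtain ⟨x, hx, rfl⟩ := mem_image.1 hy
      exact hUneg x (hTU hx)
    rw [h1, card_sdiff_of_subset h4, card_union_of_disjoint h3,
      card_image_of_injective _ neg_injective, hTc]
    exact Nat.dvd_sub hmU (Dvd.intro_left 2 (two_mul m))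
  -- `M` and `M - 2 * m` classes remain to be covered; both numbers are multiples of `m`
  obtain ⟨𝓕₁, h𝓕₁⟩ := hq₁ F r hrodd hq hqq1 h2 U (fun u => (hU u).1) hUneg (hm ▸ hmU)
  obtain ⟨𝓕₂, h𝓕₂⟩ := hq₁ F r hrodd hq hqq1 h2 U₂ (fun u hu => (hU u).1 ((hU₂ u).1 hu).1)
    (by
      intro u hu
      rw [hU₂] at hu ⊢
      exact ⟨hUneg u hu.1, hu.2.2, by rw [neg_neg]; exact hu.2.1⟩) (hm ▸ hmU₂)
  refine ⟨{
    z := z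
    E := {x | x ^ r ∈ T}
    𝓕₁ := 𝓕₁
    𝓕₂ := 𝓕₂
    even := he
    two_ne := h2
    z_ne := hz0
    zero_notMem := ?_
    tile := ?_
    tile_uniq := ?_
    slope := hslope
    fam₁ := ?_
    fam₂ := ?_ }⟩
  · intro h0
    obtain ⟨i, -, h1⟩ := (hT _).1 h0
    rw [zero_pow hr0.ne'] at h1
    exact pow_ne_zero _ hγ0 h1
  · intro x hx
    have : NeZero (M * r) := ⟨hMr0.ne'⟩
    obtain ⟨n, -, rfl⟩ := hg.eq_pow_of_pow_eq_one (hfermat x hx)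
    -- an exponent `n` in mixed radix: the lowest digit gives `w`, the middle one `j`, the highest `c`
    have hn : n = n % m + m * (n / m % h) + m * h * (n / m / h) := by
      have h1 := Nat.mod_add_div n m
      have h3 := Nat.mod_add_div (n / m) h
      calc n = n % m + m * (n / m) := h1.symm
        _ = n % m + m * (n / m % h + h * (n / m / h)) := by rw [h3]
        _ = _ := by ring
    obtain ⟨s, hs⟩ : ∃ s, s = n / m / h := ⟨_, rfl⟩
    let j : Fin h := ⟨n / m % h, Nat.mod_lt _ hh⟩
    have hc : (γ ^ (m * h * s)) ^ e = 1 := by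
      rw [← pow_mul]
      have : m * h * s * e = M * s := by rw [hM]; ring
      rw [this, pow_mul, hγp.pow_eq_one, one_pow]
    have hne : 2 * z j * γ ^ (m * h * s) ≠ 0 :=
      mul_ne_zero (mul_ne_zero h2 (hz0 j)) (pow_ne_zero _ hγ0)
    refine ⟨j, g ^ n / (2 * z j * γ ^ (m * h * s)), ?_, γ ^ (m * h * s), hc, ?_⟩
    · refine (hT _).2 ⟨n % m, Nat.mod_lt _ hm0, ?_⟩
      rw [div_pow, mul_pow, hzr, hcr _ hc, ← pow_mul, mul_comm n r, pow_mul, ← hγ,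
        eq_div_iff (mul_ne_zero (pow_ne_zero _ hγ0) (pow_ne_zero _ hγ0)), ← pow_add, ← pow_add]
      congr 1
      conv_rhs => rw [hn, ← hs]
      rw [add_assoc]
    · field_simp [hz0 j, h2, hγ0]
  · intro j j' w w' c hw hw' hc heq
    obtain ⟨i, hi, hwi⟩ := (hT _).1 hw
    obtain ⟨i', hi', hwi'⟩ := (hT _).1 hw'
    have h1 := congrArg (· ^ r) heq
    simp only [mul_pow _ w, mul_pow _ c, mul_pow _ w'] at h1
    rw [hzr, hzr, ← hwi, ← hwi', hcr c hc, ← pow_add, ← pow_add] at h1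
    have h3 := congrArg (· ^ e) h1
    simp only [mul_pow, hc, mul_one, ← pow_mul] at h3
    have hlt : ∀ (l : Fin h) (i : ℕ), i < m → (m * (l : ℕ) + i) * e < M := by
      intro l i hi
      rw [hM]
      have h4 : m * (l : ℕ) + i < m * h := by
        calc m * (l : ℕ) + i < m * l + m := by omega
          _ = m * (l + 1) := by ring
          _ ≤ m * h := Nat.mul_le_mul_left _ l.2
      calc _ < (m * h) * e := Nat.mul_lt_mul_of_pos_right h4 he0
        _ = _ := by ring
    have h4 := hγp.pow_inj (hlt j i hi) (hlt j' i' hi') h3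
    have h5 := Nat.eq_of_mul_eq_mul_right he0 h4
    have h6 : (j : ℕ) = j' := by
      have := congrArg (· / m) h5
      simpa [Nat.mul_add_div hm0, Nat.div_eq_of_lt hi, Nat.div_eq_of_lt hi'] using this
    have h7 : j = j' := Fin.ext h6
    subst h7
    rw [h5] at h1
    have h8 : c = 1 := by
      have : γ ^ (m * (j : ℕ) + i') * c = γ ^ (m * (j : ℕ) + i') * 1 := by rw [mul_one, ← h1]
      exact mul_left_cancel₀ (pow_ne_zero _ hγ0) this
    rw [h8, mul_one] at heq
    exact ⟨rfl, mul_left_cancel₀ (mul_ne_zero h2 (hz0 j)) heq⟩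
  · convert h𝓕₁ using 1
    ext x
    simp only [Set.mem_compl_iff, Set.mem_singleton_iff, Set.mem_ofPred_eq]
    exact ⟨fun hx => ⟨hx, hxU x hx⟩, fun hx => hx.1⟩
  · convert h𝓕₂ using 1
    ext x
    simp only [Set.mem_ofPred_eq, hU₂, hrodd.neg_pow]
    exact ⟨fun hx => ⟨hx.1, hxU x hx.1, hx.2⟩, fun hx => ⟨hx.1, hx.2.2⟩⟩

end Existence

/-! ### Conclusion -/

/-- Dirichlet's theorem for the residue class of `e * h * m + 1` modulo `e * h * m * (e * h)`. -/
theorem exists_prime_eq (e h m : ℕ) (he : 0 < e) (hh : 0 < h) (hm : 0 < m) (N : ℕ) :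
    ∃ p t, p.Prime ∧ N < p ∧ p = e * h * m * (1 + e * h * t) + 1 := by
  have hpos : 0 < e * h * m * (e * h) := by positivity
  have hcop : (e * h * m + 1).Coprime (e * h * m * (e * h)) := by
    refine Nat.Coprime.mul_right ?_ ?_
    · simp
    · have : e * h * m + 1 = 1 + e * h * m := by ring
      rw [this]
      simp [Nat.Coprime]
  obtain ⟨p, hp, hpp, hmod⟩ :=
    Nat.forall_exists_prime_gt_and_modEq (max N (e * h * m + 1)) hpos.ne' hcop
  have hN := (le_max_left N (e * h * m + 1)).trans_lt hp
  have hle := ((le_max_right N (e * h * m + 1)).trans_lt hp).le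
  obtain ⟨t, ht⟩ := (Nat.modEq_iff_dvd' hle).1 hmod.symm
  refine ⟨p, t, hpp, hN, ?_⟩
  have : p = e * h * m * (e * h) * t + (e * h * m + 1) := by omega
  rw [this]
  ring

/-- Let `k ≥ 4` be even and let `G` be a finite group of even order such that
every prime power dividing `|G|` either divides `k` or is relatively prime to
`k(k-1)`. Then there are infinitely many `v` for which there is a
`2`-`(v,k,1)` design whose automorphism group contains a subgroup isomorphic
to `G`. -/
theorem statement2 (k : ℕ) (hk : 4 ≤ k) (hkeven : Even k) (G : Type) [Group G]
    [Fintype G] (hG : Even (Fintype.card G))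
    (hpp : ∀ p e : ℕ, p.Prime → 1 ≤ e → p ^ e ∣ Fintype.card G →
      (p ^ e ∣ k ∨ Nat.Coprime (p ^ e) (k * (k - 1)))) :
    ∀ N : ℕ, ∃ v : ℕ, N < v ∧
      ∃ (D : Design (Fin v) k) (f : G →* Equiv.Perm (Fin v)),
        Function.Injective f ∧ ∀ g : G, IsAuto D (f g) := by
  intro N
  obtain ⟨h, hh⟩ := hkeven.two_dvd
  subst hh
  obtain ⟨q₀, hq₀⟩ := nonempty_cycloData (Fintype.card G) h hG Fintype.card_pos (by omega)
  obtain ⟨p, t, hp, hpN, hpt⟩ := exists_prime_eq (Fintype.card G) h (2 * h * (2 * h - 1))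
    Fintype.card_pos (by omega) (Nat.mul_pos (by omega) (by omega)) (max N q₀)
  have : Fact p.Prime := ⟨hp⟩
  obtain ⟨C⟩ := hq₀ (ZMod p) t (by rw [ZMod.card, ← hpt])
    (by rw [ZMod.card]; exact ((le_max_right _ _).trans_lt hpN).le)
  obtain ⟨v, hv, D, f, hf, hD⟩ := design_of_cycloData (G := G) C
  rw [ZMod.card] at hv
  exact ⟨v, ((le_max_left _ _).trans_lt hpN).trans_le hv, D, f, hf, hD⟩
end

section
/- Let k ≥ 3 be an integer. There exists P such that for every prime p > P with p ≡ 1 (mod k(k − 1)) there is a 2-(p,k,1)-design E whose point set is the field F_p of p elements and whose automorphism group contains every translation x ↦ x + b with b ∈ F_p. Moreover, if p = 1 + k(k − 1)t with t odd, then E can be chosen so that in addition every map x ↦ sx with s ∈ F_p and s^t = 1 is an automorphism of E. -/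
/-! ### Pseudorandomness of cosets -/

section Energy
variable {p : ℕ} [Fact p.Prime]

/-- For `c ≠ c'`, the pair `(x + l c, x + l c')` runs over all of `F_p × F_p` as `(l, x)` does. -/
lemma sum_affine_pair (f : ZMod p → ℝ) {c c' : ZMod p} (h : c ≠ c') :
    ∑ l : ZMod p, ∑ x : ZMod p, f (x + l * c) * f (x + l * c') = (∑ x, f x) ^ 2 := by
  rw [pow_two, Finset.sum_mul_sum, ← Finset.sum_product', ← Finset.sum_product']
  have hc : c - c' ≠ 0 := sub_ne_zero.2 h
  refine Finset.sum_bij' (fun q _ => (q.2 + q.1 * c, q.2 + q.1 * c'))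
    (fun q _ => ((q.1 - q.2) / (c - c'), q.1 - (q.1 - q.2) / (c - c') * c)) ?_ ?_ ?_ ?_ ?_
  · simp
  · simp
  · rintro ⟨l, x⟩ -
    ext <;> simp <;> field_simp
    ring
  · rintro ⟨y, z⟩ -
    ext
    · simp
    · simp
      field_simp; ring
  · simp

lemma energy_all (f : ZMod p → ℝ) (hf : ∑ x, f x = 0) (C : Finset (ZMod p)) :
    ∑ l : ZMod p, ∑ x : ZMod p, (∑ c ∈ C, f (x + l * c)) ^ 2 = p * C.card * ∑ x, f x ^ 2 := by
  have h1 : ∀ c ∈ C, ∑ c' ∈ C, ∑ l : ZMod p, ∑ x : ZMod p, f (x + l * c) * f (x + l * c')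
      = p * ∑ x, f x ^ 2 := by
    intro c hc
    rw [Finset.sum_eq_single_of_mem c hc]
    · have : ∀ l : ZMod p, ∑ x : ZMod p, f (x + l * c) * f (x + l * c) = ∑ x, f x ^ 2 := by
        intro l
        simp_rw [← pow_two]
        exact Equiv.sum_comp (Equiv.addRight (l * c)) (fun x => f x ^ 2)
      simp [this, ZMod.card]
    · intro c' _ h
      rw [sum_affine_pair f h.symm, hf]; simp
  calc _ = ∑ l : ZMod p, ∑ x : ZMod p, ∑ c ∈ C, ∑ c' ∈ C, f (x + l * c) * f (x + l * c') := by
        simp_rw [pow_two, Finset.sum_mul_sum]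
    _ = ∑ l : ZMod p, ∑ c ∈ C, ∑ x : ZMod p, ∑ c' ∈ C, f (x + l * c) * f (x + l * c') :=
        Finset.sum_congr rfl fun _ _ => Finset.sum_comm
    _ = ∑ l : ZMod p, ∑ c ∈ C, ∑ c' ∈ C, ∑ x : ZMod p, f (x + l * c) * f (x + l * c') :=
        Finset.sum_congr rfl fun _ _ => Finset.sum_congr rfl fun _ _ => Finset.sum_comm
    _ = ∑ c ∈ C, ∑ l : ZMod p, ∑ c' ∈ C, ∑ x : ZMod p, f (x + l * c) * f (x + l * c') :=
        Finset.sum_comm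
    _ = ∑ c ∈ C, ∑ c' ∈ C, ∑ l : ZMod p, ∑ x : ZMod p, f (x + l * c) * f (x + l * c') :=
        Finset.sum_congr rfl fun _ _ => Finset.sum_comm
    _ = _ := by
        rw [Finset.sum_congr rfl h1]; simp; ring

/-- The coset of `a` modulo the subgroup of elements whose `n`-th power is `1`. -/
def coset (n : ℕ) (a : ZMod p) : Finset (ZMod p) := Finset.univ.filter fun x => x ^ n = a ^ n

lemma mem_coset {n : ℕ} {a x : ZMod p} : x ∈ coset n a ↔ x ^ n = a ^ n := by simp [coset]

lemma sum_coset_mul {n : ℕ} (a : ZMod p) {l : ZMod p} (hl0 : l ≠ 0) (hl : l ^ n = 1)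
    (f : ZMod p → ℝ) : ∑ c ∈ coset n a, f (l * c) = ∑ c ∈ coset n a, f c := by
  refine Finset.sum_bij' (fun c _ => l * c) (fun c _ => l⁻¹ * c) ?_ ?_ ?_ ?_ ?_
  · intro c hc; rw [mem_coset] at *; rw [mul_pow, hl, one_mul, hc]
  · intro c hc; rw [mem_coset] at *; rw [mul_pow, inv_pow, hl, inv_one, one_mul, hc]
  · intro c _; field_simp
  · intro c _; field_simp
  · intro c _; rfl

lemma card_coset {n : ℕ} {a : ZMod p} (ha : a ≠ 0) :
    (coset n a).card = (coset n (1 : ZMod p)).card := by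
  symm
  refine Finset.card_bij' (fun c _ => a * c) (fun c _ => a⁻¹ * c) ?_ ?_ ?_ ?_
  · intro c hc; rw [mem_coset] at *; rw [mul_pow, hc, one_pow, mul_one]
  · intro c hc; rw [mem_coset] at *
    rw [mul_pow, inv_pow, hc, one_pow, inv_mul_cancel₀ (pow_ne_zero _ ha)]
  · intro c _; field_simp
  · intro c _; field_simp

lemma energy_le {n : ℕ} (hn : n ≠ 0) {a : ZMod p} (ha : a ≠ 0) (f : ZMod p → ℝ)
    (hf : ∑ x, f x = 0) :
    ∑ x : ZMod p, (∑ c ∈ coset n a, f (x + c)) ^ 2 ≤ p * ∑ x, f x ^ 2 := by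
  have h1 : ∑ l ∈ coset n (1 : ZMod p), ∑ x : ZMod p, (∑ c ∈ coset n a, f (x + l * c)) ^ 2
      = (coset n a).card * ∑ x : ZMod p, (∑ c ∈ coset n a, f (x + c)) ^ 2 := by
    rw [card_coset ha, ← nsmul_eq_mul]
    refine Finset.sum_eq_card_nsmul fun l hl => ?_
    rw [mem_coset, one_pow] at hl
    have hl0 : l ≠ 0 := by rintro rfl; simp [hn] at hl
    refine Finset.sum_congr rfl fun x _ => ?_
    rw [sum_coset_mul a hl0 hl (fun c => f (x + c))]
  have h2 : ∑ l ∈ coset n (1 : ZMod p), ∑ x : ZMod p, (∑ c ∈ coset n a, f (x + l * c)) ^ 2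
      ≤ ∑ l : ZMod p, ∑ x : ZMod p, (∑ c ∈ coset n a, f (x + l * c)) ^ 2 :=
    Finset.sum_le_sum_of_subset_of_nonneg (Finset.subset_univ _)
      fun _ _ _ => Finset.sum_nonneg fun _ _ => sq_nonneg _
  rw [h1, energy_all f hf] at h2
  have hpos : (0 : ℝ) < (coset n a).card := by
    exact_mod_cast Finset.card_pos.2 ⟨a, mem_coset.2 rfl⟩
  nlinarith

/-- The number of points of `A` in the translate of a coset by `x`. -/
def hits (n : ℕ) (a : ZMod p) (A : Finset (ZMod p)) (x : ZMod p) : ℕ :=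
  ((coset n a).filter fun c => x + c ∈ A).card

open Classical in
/-- Chebyshev's inequality: few translates of a coset meet `A` in less than half of the expected
number of points. -/
lemma card_bad_le_s3 {n : ℕ} (hn : n ≠ 0) {a : ZMod p} (ha : a ≠ 0) (A : Finset (ZMod p))
    (hA : A.Nonempty) :
    ((Finset.univ.filter fun x => (hits n a A x : ℝ) < (coset n a).card * A.card / (2 * p)).card : ℝ)
      * ((coset n a).card : ℝ) ^ 2 * A.card ≤ 4 * p ^ 3 := by
  have hp : (0 : ℝ) < p := by exact_mod_cast (Fact.out : p.Prime).pos
  have hA0 : (0 : ℝ) < A.card := by exact_mod_cast hA.card_pos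
  set X := Finset.univ.filter fun x => (hits n a A x : ℝ) < (coset n a).card * A.card / (2 * p)
  set q : ℝ := A.card / p with hq
  let f : ZMod p → ℝ := fun x => (if x ∈ A then 1 else 0) - q
  have hf : ∑ x, f x = 0 := by
    simp only [f, Finset.sum_sub_distrib, Finset.sum_ite_mem, Finset.univ_inter, Finset.sum_const,
      Finset.card_univ, ZMod.card, nsmul_eq_mul, mul_one]
    rw [hq]; field_simp; simp
  have hf2 : ∑ x, f x ^ 2 ≤ A.card := by
    have h : ∀ x, f x ^ 2 = (1 - 2 * q) * (if x ∈ A then 1 else 0) + q ^ 2 := by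
      intro x; simp only [f]; split_ifs <;> ring
    simp_rw [h]
    simp only [Finset.sum_add_distrib, ← Finset.mul_sum, Finset.sum_ite_mem, Finset.univ_inter,
      Finset.sum_const, Finset.card_univ, ZMod.card, nsmul_eq_mul, mul_one]
    have h1 : (p : ℝ) * q ^ 2 = q * A.card := by rw [hq]; field_simp
    have h2 : 0 ≤ q * A.card := by positivity
    rw [h1]; linarith
  have hF : ∀ x, ∑ c ∈ coset n a, f (x + c) = hits n a A x - (coset n a).card * q := by
    intro x
    simp [f, hits, Finset.sum_sub_distrib, Finset.sum_boole]
  have h1 := energy_le hn ha f hf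
  have h2 : (X.card : ℝ) * ((coset n a).card * A.card / (2 * p)) ^ 2
      ≤ ∑ x : ZMod p, (∑ c ∈ coset n a, f (x + c)) ^ 2 := by
    rw [← nsmul_eq_mul]
    refine le_trans (Finset.card_nsmul_le_sum X
      (fun x => (∑ c ∈ coset n a, f (x + c)) ^ 2) _ fun x hx => ?_)
      (Finset.sum_le_sum_of_subset_of_nonneg (Finset.subset_univ _) fun _ _ _ => sq_nonneg _)
    have hx' : (hits n a A x : ℝ) < (coset n a).card * A.card / (2 * p) := by
      simpa [X] using hx
    have e : (coset n a).card * q = 2 * ((coset n a).card * A.card / (2 * p) : ℝ) := by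
      rw [hq]; field_simp
    simp only [hF]
    have h0 : (0 : ℝ) ≤ (coset n a).card * A.card / (2 * p) := by positivity
    rw [e]
    nlinarith
  have h3 : (X.card : ℝ) * ((coset n a).card * A.card / (2 * p)) ^ 2 ≤ p * A.card :=
    h2.trans (h1.trans (mul_le_mul_of_nonneg_left hf2 hp.le))
  have h4 : (X.card : ℝ) * ((coset n a).card * A.card / (2 * p)) ^ 2
      = (X.card * (coset n a).card ^ 2 * A.card) * A.card / (4 * p ^ 2) := by
    field_simp; ring
  rw [h4, div_le_iff₀ (by positivity)] at h3
  have h5 : (X.card * (coset n a).card ^ 2 * A.card) * A.card ≤ (4 * (p : ℝ) ^ 3) * A.card := by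
    linarith
  exact le_of_mul_le_mul_right h5 hA0

end Energy

/-! ### Greedy choice of points with differences in prescribed cosets -/

lemma exists_primitive {p : ℕ} [Fact p.Prime] : ∃ g : ZMod p, IsPrimitiveRoot g (p - 1) := by
  obtain ⟨u, hu⟩ := IsCyclic.exists_ofOrder_eq_natCard (α := (ZMod p)ˣ)
  rw [Nat.card_eq_fintype_card, ZMod.card_units] at hu
  refine ⟨u, ?_⟩
  rw [IsPrimitiveRoot.coe_units_iff, ← hu]
  exact IsPrimitiveRoot.orderOf u

lemma card_coset_eq {p : ℕ} [Fact p.Prime] {m n : ℕ} (hn : 0 < n) (hp : p = 1 + m * n)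
    {a : ZMod p} (ha : a ≠ 0) : (coset n a).card = n := by
  obtain ⟨g, hg⟩ := exists_primitive (p := p)
  have hmn : p - 1 = m * n := by omega
  have h1 : IsPrimitiveRoot (g ^ m) n :=
    hg.pow (by have := (Fact.out : p.Prime).two_le; omega) hmn
  rw [card_coset ha]
  refine Eq.trans (congrArg Finset.card ?_) h1.card_nthRootsFinset
  ext x
  rw [mem_coset, Polynomial.mem_nthRootsFinset hn, one_pow]

open Classical in
/-- For `p` large, points `b i` can be chosen in given dense sets `A i` so that each difference
`b j - b i` lies in a prescribed coset of the subgroup of index `m`. The order `n` of that subgroup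
is even, so the coset of a difference does not depend on its sign. -/
lemma exists_embedding_s3 {ι : Type} (m : ℕ) (hm : 0 < m) (s : Finset ι) :
    ∀ δ : ℝ, 0 < δ → ∃ P : ℕ, ∀ (p n : ℕ) [Fact p.Prime], P < p → Even n → p = 1 + m * n →
      ∀ (A : ι → Finset (ZMod p)), (∀ i ∈ s, δ * p ≤ (A i).card) →
      ∀ a : Sym2 ι → ZMod p, (∀ z, a z ≠ 0) →
      ∃ b : ι → ZMod p, (∀ i ∈ s, b i ∈ A i) ∧
        ∀ i ∈ s, ∀ j ∈ s, i ≠ j → (b j - b i) ^ n = a s(i, j) ^ n := by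
  induction s using Finset.induction_on with
  | empty => intro δ _; exact ⟨0, by intros; exact ⟨fun _ => 0, by simp, by simp⟩⟩
  | insert v s hv ih =>
    intro δ hδ
    have hm0 : (0 : ℝ) < m := by exact_mod_cast hm
    have hm1 : (1 : ℝ) ≤ m := by exact_mod_cast hm
    obtain ⟨P₀, hP₀⟩ := ih (δ / (4 * m)) (by positivity)
    -- At most `16 m ^ 2 / δ` choices of the new point are bad for each of the other points.
    obtain ⟨P₁, hP₁⟩ := exists_nat_gt (s.card * (16 * m ^ 2 / δ) / δ)
    refine ⟨max P₀ P₁, ?_⟩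
    intro p n _ hP hn hp A hA a ha
    have hpp : p.Prime := Fact.out
    have hp0 : (0 : ℝ) < p := by exact_mod_cast hpp.pos
    have hn0 : 0 < n := by
      rcases Nat.eq_zero_or_pos n with h | h
      · subst h; exact absurd hp hpp.one_lt.ne'
      · exact h
    have hcard : ∀ z, (coset n (a z)).card = n := fun z => card_coset_eq hn0 hp (ha z)
    have hnp : (p : ℝ) ≤ 2 * m * n := by
      have : p ≤ 2 * m * n := by
        have : 1 ≤ m * n := Nat.mul_pos hm hn0
        rw [hp]; nlinarith
      exact_mod_cast this
    let bad : ι → Finset (ZMod p) := fun i => Finset.univ.filter fun x =>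
      (hits n (a s(v, i)) (A i) x : ℝ) < (coset n (a s(v, i))).card * (A i).card / (2 * p)
    have hbad : ∀ i ∈ s, ((bad i).card : ℝ) ≤ 16 * m ^ 2 / δ := by
      intro i hi
      have hAi := hA i (Finset.mem_insert_of_mem hi)
      have hpos : (0 : ℝ) < (A i).card := lt_of_lt_of_le (by positivity) hAi
      have h := card_bad_le_s3 hn0.ne' (ha s(v, i)) (A i)
        (Finset.card_pos.1 (by exact_mod_cast hpos))
      change ((bad i).card : ℝ) * _ * _ ≤ _ at h
      rw [hcard] at h
      rw [le_div_iff₀ hδ]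
      have hX : (0 : ℝ) ≤ (bad i).card := by positivity
      have h1 : ((bad i).card : ℝ) * n ^ 2 * (δ * p) ≤ 4 * p ^ 3 :=
        (mul_le_mul_of_nonneg_left hAi (by positivity)).trans h
      have h2 : (p : ℝ) ^ 2 ≤ (2 * m * n) ^ 2 := pow_le_pow_left₀ hp0.le hnp 2
      have h3 : (bad i).card * δ * (p : ℝ) ^ 2 ≤ (bad i).card * δ * (2 * m * n) ^ 2 :=
        mul_le_mul_of_nonneg_left h2 (by positivity)
      have h4 : ((bad i).card * δ * (p : ℝ) ^ 2) * p ≤ (16 * m ^ 2 * p ^ 2) * p := by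
        have := mul_le_mul_of_nonneg_right h3 hp0.le
        have := mul_le_mul_of_nonneg_left h1 (by positivity : (0 : ℝ) ≤ 4 * m ^ 2)
        nlinarith
      have h5 := le_of_mul_le_mul_right h4 hp0
      exact le_of_mul_le_mul_right h5 (by positivity : (0 : ℝ) < (p : ℝ) ^ 2)
    have hlt : (s.biUnion bad).card < (A v).card := by
      have h1 : ((s.biUnion bad).card : ℝ) ≤ s.card * (16 * m ^ 2 / δ) := by
        calc ((s.biUnion bad).card : ℝ) ≤ ∑ i ∈ s, ((bad i).card : ℝ) := by
              exact_mod_cast Finset.card_biUnion_le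
          _ ≤ s.card • (16 * m ^ 2 / δ) := Finset.sum_le_card_nsmul _ _ _ hbad
          _ = _ := by rw [nsmul_eq_mul]
      have h2 : s.card * (16 * m ^ 2 / δ) < δ * p := by
        have : (P₁ : ℝ) < p := by exact_mod_cast (le_max_right _ _).trans_lt hP
        have := hP₁.trans this
        rw [div_lt_iff₀ hδ] at this
        linarith
      have h3 := hA v (Finset.mem_insert_self _ _)
      exact_mod_cast h1.trans_lt (h2.trans_le h3)
    obtain ⟨x, hxA, hx⟩ := Finset.exists_mem_notMem_of_card_lt_card hlt
    have hx' : ∀ i ∈ s, x ∉ bad i := fun i hi h => hx (Finset.mem_biUnion.2 ⟨i, hi, h⟩)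
    let A' : ι → Finset (ZMod p) := fun i => (A i).filter fun y => (y - x) ^ n = a s(v, i) ^ n
    have hA' : ∀ i ∈ s, δ / (4 * m) * p ≤ (A' i).card := by
      intro i hi
      have h1 : hits n (a s(v, i)) (A i) x ≤ (A' i).card := by
        refine Finset.card_le_card_of_injOn (fun c => x + c) ?_ ?_
        · intro c hc
          simp only [Finset.coe_filter, Set.mem_ofPred_eq, mem_coset] at hc
          simp [A', hc]
        · intro c _ c' _ h
          exact add_left_cancel h
      have h2 : ((coset n (a s(v, i))).card * (A i).card / (2 * p) : ℝ)
          ≤ hits n (a s(v, i)) (A i) x := by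
        have := hx' i hi
        simpa [bad] using this
      rw [hcard] at h2
      have h3 : δ / (4 * m) * p ≤ (n * (A i).card / (2 * p) : ℝ) := by
        rw [le_div_iff₀ (by positivity), div_mul_eq_mul_div, div_mul_eq_mul_div,
          div_le_iff₀ (by positivity)]
        have hAi := hA i (Finset.mem_insert_of_mem hi)
        have := mul_le_mul hnp hAi (by positivity) (by positivity)
        nlinarith
      have h4 : (hits n (a s(v, i)) (A i) x : ℝ) ≤ (A' i).card := by exact_mod_cast h1
      linarith
    obtain ⟨b, hbA, hb⟩ := hP₀ p n ((le_max_left _ _).trans_lt hP) hn hp A' hA' a ha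
    have hne : ∀ i ∈ s, i ≠ v := fun i hi h => hv (h ▸ hi)
    have hbx : ∀ i ∈ s, (b i - x) ^ n = a s(v, i) ^ n := fun i hi =>
      (Finset.mem_filter.1 (hbA i hi)).2
    refine ⟨Function.update b v x, ?_, ?_⟩
    · intro i hi
      rcases Finset.mem_insert.1 hi with rfl | hi
      · simpa using hxA
      · rw [Function.update_of_ne (hne i hi)]
        exact (Finset.mem_filter.1 (hbA i hi)).1
    · intro i hi j hj hij
      rcases Finset.mem_insert.1 hi with hiv | his <;>
        rcases Finset.mem_insert.1 hj with hjv | hjs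
      · exact absurd (hiv.trans hjv.symm) hij
      · subst hiv
        rw [Function.update_self, Function.update_of_ne (hne j hjs)]
        exact hbx j hjs
      · subst hjv
        rw [Function.update_self, Function.update_of_ne (hne i his), ← neg_sub, hn.neg_pow,
          Sym2.eq_swap]
        exact hbx i his
      · rw [Function.update_of_ne (hne i his), Function.update_of_ne (hne j hjs)]
        exact hb i his j hjs hij

/-- A base block: each coset of the subgroup of order `2t` contains, up to sign, exactly one
difference of `b`. -/
lemma exists_base (k : ℕ) (hk : 2 ≤ k) :
    ∃ P : ℕ, ∀ (p t : ℕ) [Fact p.Prime], P < p → p = 1 + k * (k - 1) * t →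
      ∃ b : Fin k → ZMod p, b.Injective ∧
        (∀ d : ZMod p, d ≠ 0 → ∃ i j, (b j - b i) ^ (2 * t) = d ^ (2 * t)) ∧
        (∀ i j i' j', i ≠ j → i' ≠ j' →
          (b j - b i) ^ (2 * t) = (b j' - b i') ^ (2 * t) → s(i, j) = s(i', j')) := by
  have hchoose : k * (k - 1) = k.choose 2 * 2 := by
    rw [Nat.choose_two_right, Nat.div_mul_cancel (Nat.even_mul_pred_self k).two_dvd]
  have hm : 0 < k.choose 2 := Nat.choose_pos hk
  set m := k.choose 2 with hmdef
  obtain ⟨P, hP⟩ := exists_embedding_s3 (ι := Fin k) m hm Finset.univ 1 one_pos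
  refine ⟨P, ?_⟩
  intro p t _ hPp hp
  have hp' : p = 1 + m * (2 * t) := by rw [hp, hchoose]; ring
  have hpp : p.Prime := Fact.out
  have h1p := hpp.one_lt
  obtain ⟨g, hg⟩ := exists_primitive (p := p)
  have hg0 : g ≠ 0 := by
    rintro rfl
    have h := hg.pow_eq_one
    rw [zero_pow (by omega)] at h
    exact zero_ne_one h
  have hz : IsPrimitiveRoot (g ^ (2 * t)) m := hg.pow (by omega) (by rw [mul_comm]; omega)
  have ht0 : 2 * t ≠ 0 := by rintro h; rw [h] at hp'; omega
  have hcard : Fintype.card {z : Sym2 (Fin k) // ¬ z.IsDiag} = Fintype.card (Fin m) := by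
    rw [Sym2.card_subtype_not_diag]; simp [hmdef]
  let e := Fintype.equivOfCardEq hcard
  let a : Sym2 (Fin k) → ZMod p := fun z => if h : ¬ z.IsDiag then g ^ (e ⟨z, h⟩ : ℕ) else 1
  have ha : ∀ z, a z ≠ 0 := by
    intro z; simp only [a]; split_ifs
    · exact one_ne_zero
    · exact pow_ne_zero _ hg0
  obtain ⟨b, -, hb⟩ := hP p (2 * t) hPp (even_two_mul t) hp' (fun _ => Finset.univ)
    (by intro i _; simp [ZMod.card]) a ha
  have hb' : ∀ i j (h : i ≠ j),
      (b j - b i) ^ (2 * t) = (g ^ (2 * t)) ^ (e ⟨s(i, j), by simpa using h⟩ : ℕ) := by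
    intro i j h
    rw [hb i (Finset.mem_univ _) j (Finset.mem_univ _) h]
    simp only [a]
    rw [dif_pos (by simpa using h), ← pow_mul, ← pow_mul, mul_comm]
  refine ⟨b, ?_, ?_, ?_⟩
  · intro i j hij
    by_contra h
    have h1 := hb' i j h
    rw [hij, sub_self, zero_pow ht0] at h1
    exact pow_ne_zero _ (pow_ne_zero _ hg0) h1.symm
  · intro d hd
    have h1 : (d ^ (2 * t)) ^ m = 1 := by
      rw [← pow_mul, mul_comm, show m * (2 * t) = p - 1 by omega]
      exact ZMod.pow_card_sub_one_eq_one hd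
    have : NeZero m := ⟨hm.ne'⟩
    obtain ⟨r, hr, hrd⟩ := hz.eq_pow_of_pow_eq_one h1
    obtain ⟨⟨z, hzd⟩, hze⟩ := e.surjective ⟨r, hr⟩
    induction z using Sym2.ind with
    | _ i j =>
      refine ⟨i, j, ?_⟩
      rw [hb' i j (by simpa using hzd), hze, hrd]
  · intro i j i' j' h h' heq
    rw [hb' i j h, hb' i' j' h'] at heq
    have h1 := hz.pow_inj (e _).2 (e _).2 heq
    have h2 := e.injective (Fin.ext h1)
    exact congrArg Subtype.val h2

/-! ### The design generated by a base block -/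

section DesignOf
variable {p : ℕ} [Fact p.Prime] {k : ℕ}

/-- The block `s b + z`. -/
def blk (b : Fin k → ZMod p) (s z : ZMod p) : Finset (ZMod p) :=
  Finset.univ.image fun i => s * b i + z

lemma mem_blk {b : Fin k → ZMod p} {s z x : ZMod p} : x ∈ blk b s z ↔ ∃ i, s * b i + z = x := by
  simp [blk]

/-- The blocks `s b + z` with `s ∈ S` and `z` arbitrary form a design when every nonzero element is
uniquely of the form `s (b j - b i)`. -/
def designOf (b : Fin k → ZMod p) (S : Finset (ZMod p)) (hb : b.Injective) (hS : ∀ s ∈ S, s ≠ 0)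
    (hex : ∀ d : ZMod p, d ≠ 0 → ∃ s ∈ S, ∃ i j, s * (b j - b i) = d)
    (huniq : ∀ s ∈ S, ∀ s' ∈ S, ∀ i j i' j', i ≠ j → i' ≠ j' →
      s * (b j - b i) = s' * (b j' - b i') → s = s' ∧ i = i') : Design (ZMod p) k where
  blocks := (S ×ˢ Finset.univ).image fun q => blk b q.1 q.2
  blockSize := by
    intro B hB
    obtain ⟨⟨s, z⟩, hq, rfl⟩ := Finset.mem_image.1 hB
    have hs := hS s (Finset.mem_product.1 hq).1
    have hinj : Function.Injective fun i => s * b i + z :=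
      fun i j h => hb (mul_left_cancel₀ hs (add_right_cancel h))
    simp only [blk]
    rw [Finset.card_image_of_injective _ hinj]
    simp
  pairCover := by
    intro x y hxy
    obtain ⟨s, hs, i, j, hd⟩ := hex (y - x) (sub_ne_zero.2 hxy.symm)
    refine ⟨blk b s (x - s * b i), ⟨?_, ?_, ?_⟩, ?_⟩
    · exact Finset.mem_image.2 ⟨(s, _), by simp [hs], rfl⟩
    · exact mem_blk.2 ⟨i, by ring⟩
    · exact mem_blk.2 ⟨j, by linear_combination hd⟩
    · rintro B ⟨hB, hx, hy⟩
      obtain ⟨⟨s', z⟩, hq, rfl⟩ := Finset.mem_image.1 hB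
      have hs' := (Finset.mem_product.1 hq).1
      obtain ⟨i', hi'⟩ := mem_blk.1 hx
      obtain ⟨j', hj'⟩ := mem_blk.1 hy
      simp only at hi' hj' hs'
      have hij : i ≠ j := by
        rintro rfl
        rw [sub_self, mul_zero] at hd
        exact hxy (sub_eq_zero.1 hd.symm).symm
      have hij' : i' ≠ j' := by
        rintro rfl
        exact hxy (hi'.symm.trans hj')
      obtain ⟨h1, h2⟩ := huniq s hs s' hs' i j i' j' hij hij'
        (by linear_combination hd + hi' - hj')
      subst h1 h2
      have : z = x - s * b i := by linear_combination hi'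
      rw [this]

lemma mem_designOf {b : Fin k → ZMod p} {S : Finset (ZMod p)} {hb hS hex huniq}
    {B : Finset (ZMod p)} :
    B ∈ (designOf b S hb hS hex huniq).blocks ↔ ∃ s ∈ S, ∃ z, blk b s z = B := by
  simp [designOf]

/-- A permutation mapping blocks to blocks is an automorphism, as there are finitely many blocks. -/
lemma isAuto_of_maps {α : Type} [DecidableEq α] {D : Design α k} {g : Equiv.Perm α}
    (h : ∀ B ∈ D.blocks, B.image g ∈ D.blocks) : IsAuto D g := by
  have hinj : Function.Injective fun B : Finset α => B.image g :=
    Finset.image_injective g.injective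
  have heq : D.blocks.image (fun B => B.image g) = D.blocks := by
    apply Finset.eq_of_subset_of_card_le
    · intro B hB
      obtain ⟨B', hB', rfl⟩ := Finset.mem_image.1 hB
      exact h B' hB'
    · rw [Finset.card_image_of_injective _ hinj]
  intro B
  refine ⟨h B, fun hB => ?_⟩
  rw [← heq] at hB
  obtain ⟨B', hB', hBB⟩ := Finset.mem_image.1 hB
  exact hinj hBB ▸ hB'

/-- For `S` a set of representatives modulo `±1` of the `2t`-th roots of unity, a base block
generates a design which is invariant under translations and under each `r` with `r S ⊆ S`. -/
lemma exists_design {t : ℕ} (ht : t ≠ 0) (b : Fin k → ZMod p) (hb : b.Injective)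
    (hsurj : ∀ d : ZMod p, d ≠ 0 → ∃ i j, (b j - b i) ^ (2 * t) = d ^ (2 * t))
    (hinj : ∀ i j i' j', i ≠ j → i' ≠ j' →
      (b j - b i) ^ (2 * t) = (b j' - b i') ^ (2 * t) → s(i, j) = s(i', j'))
    (S : Finset (ZMod p)) (hS : ∀ s ∈ S, s ^ (2 * t) = 1)
    (hSex : ∀ h : ZMod p, h ^ (2 * t) = 1 → h ∈ S ∨ -h ∈ S)
    (hSneg : ∀ s ∈ S, -s ∉ S) :
    ∃ E : Design (ZMod p) k, (∀ z : ZMod p, IsAuto E (Equiv.addRight z)) ∧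
      ∀ (r : ZMod p) (g : Equiv.Perm (ZMod p)), (∀ s ∈ S, r * s ∈ S) → (∀ x, g x = r * x) →
        IsAuto E g := by
  have ht2 : 2 * t ≠ 0 := by omega
  refine ⟨designOf b S hb ?_ ?_ ?_, ?_, ?_⟩
  · rintro s hs rfl
    have := hS 0 hs
    rw [zero_pow ht2] at this
    exact zero_ne_one this
  · intro d hd
    obtain ⟨i, j, hij⟩ := hsurj d hd
    have hne : b j - b i ≠ 0 := by
      intro h
      rw [h, zero_pow ht2] at hij
      exact pow_ne_zero _ hd hij.symm
    have h1 : (d / (b j - b i)) ^ (2 * t) = 1 := by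
      rw [div_pow, hij, div_self (pow_ne_zero _ hd)]
    rcases hSex _ h1 with h | h
    · exact ⟨_, h, i, j, div_mul_cancel₀ _ hne⟩
    · refine ⟨_, h, j, i, ?_⟩
      rw [← neg_sub (b j), neg_mul_neg, div_mul_cancel₀ _ hne]
  · intro s hs s' hs' i j i' j' hij hij' heq
    have h1 : s(i, j) = s(i', j') := by
      apply hinj i j i' j' hij hij'
      have := congrArg (· ^ (2 * t)) heq
      simpa [mul_pow, hS s hs, hS s' hs'] using this
    have hne : b j - b i ≠ 0 := sub_ne_zero.2 fun h => hij (hb h).symm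
    rcases Sym2.eq_iff.1 h1 with ⟨rfl, rfl⟩ | ⟨rfl, rfl⟩
    · exact ⟨mul_right_cancel₀ hne heq, rfl⟩
    · have : s = -s' := mul_right_cancel₀ hne (by linear_combination heq)
      exact absurd (this ▸ hs) (hSneg s' hs')
  · intro z
    refine isAuto_of_maps fun B hB => ?_
    obtain ⟨s, hs, y, rfl⟩ := mem_designOf.1 hB
    refine mem_designOf.2 ⟨s, hs, y + z, ?_⟩
    simp only [blk, Finset.image_image]
    refine Finset.image_congr fun i _ => ?_
    simp [add_assoc]
  · intro r g hr hg
    refine isAuto_of_maps fun B hB => ?_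
    obtain ⟨s, hs, y, rfl⟩ := mem_designOf.1 hB
    refine mem_designOf.2 ⟨r * s, hr s hs, r * y, ?_⟩
    simp only [blk, Finset.image_image]
    refine Finset.image_congr fun i _ => ?_
    simp only [Function.comp, hg]
    ring

end DesignOf

/-- Let `k ≥ 3`. There exists `P` such that for every prime `p > P` with
`p ≡ 1 (mod k(k-1))` there is a `2`-`(p,k,1)` design on `F_p = ZMod p` all of
whose translations `x ↦ x + b` are automorphisms; moreover if `p = 1 + k(k-1)t`
with `t` odd, the design can be chosen so that in addition every multiplication
`x ↦ s·x` with `s^t = 1` is an automorphism. -/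
theorem statement3 (k : ℕ) (hk : 3 ≤ k) :
    ∃ P : ℕ, ∀ p : ℕ, p.Prime → P < p → (k * (k - 1)) ∣ (p - 1) →
      (∃ E : Design (ZMod p) k, ∀ b : ZMod p, IsAuto E (Equiv.addRight b)) ∧
      (∀ t : ℕ, p = 1 + k * (k - 1) * t → Odd t →
        ∃ E : Design (ZMod p) k,
          (∀ b : ZMod p, IsAuto E (Equiv.addRight b)) ∧
          (∀ (s : ZMod p) (g : Equiv.Perm (ZMod p)), s ^ t = 1 →
            (∀ x : ZMod p, g x = s * x) → IsAuto E g)) := by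
  obtain ⟨P, hP⟩ := exists_base k (by omega)
  refine ⟨max P 2, ?_⟩
  intro p hpp hPp hdvd
  have : Fact p.Prime := ⟨hpp⟩
  have hp2 : 2 < p := (le_max_right _ _).trans_lt hPp
  have hneg : ∀ x : ZMod p, x ≠ 0 → x ≠ -x := by
    intro x hx h
    have : Fact (2 < p) := ⟨hp2⟩
    exact ZMod.neg_one_ne_one (n := p) (mul_right_cancel₀ hx (by rw [neg_one_mul, one_mul, ← h]))
  have hPp' := (le_max_left _ _).trans_lt hPp
  constructor
  · obtain ⟨t, ht⟩ := hdvd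
    have hp : p = 1 + k * (k - 1) * t := by omega
    have ht0 : t ≠ 0 := by rintro rfl; omega
    obtain ⟨b, hb, hsurj, hinj⟩ := hP p t hPp' hp
    obtain ⟨E, hE, -⟩ := exists_design ht0 b hb hsurj hinj
      -- the representatives modulo `±1` with least residue
      (Finset.univ.filter fun h => h ^ (2 * t) = 1 ∧ h.val < (-h).val)
      (by intro s hs; simpa using (Finset.mem_filter.1 hs).2.1)
      (by
        intro h hh
        have h0 : h ≠ 0 := by rintro rfl; rw [zero_pow (by omega)] at hh; exact zero_ne_one hh
        have hv : h.val ≠ (-h).val := fun e => hneg h h0 (ZMod.val_injective p e)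
        simp only [Finset.mem_filter, Finset.mem_univ, true_and, neg_neg,
          (even_two_mul t).neg_pow, hh]
        omega)
      (by
        intro s hs hs'
        simp only [Finset.mem_filter, Finset.mem_univ, true_and, neg_neg] at hs hs'
        omega)
    exact ⟨E, hE⟩
  · intro t hp ht
    have ht0 : t ≠ 0 := by rintro rfl; omega
    obtain ⟨b, hb, hsurj, hinj⟩ := hP p t hPp' hp
    obtain ⟨E, hE, hE'⟩ := exists_design ht0 b hb hsurj hinj
      (Finset.univ.filter fun h => h ^ t = 1)
      (by
        intro s hs
        rw [mul_comm, pow_mul, (Finset.mem_filter.1 hs).2, one_pow])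
      (by
        intro h hh
        simp only [Finset.mem_filter, Finset.mem_univ, true_and, ht.neg_pow]
        rw [mul_comm, pow_mul] at hh
        rcases sq_eq_one_iff.1 hh with h1 | h1
        · exact Or.inl h1
        · exact Or.inr (by rw [h1, neg_neg]))
      (by
        intro s hs hs'
        simp only [Finset.mem_filter, Finset.mem_univ, true_and, ht.neg_pow] at hs hs'
        rw [hs] at hs'
        exact hneg 1 one_ne_zero hs'.symm)
    refine ⟨E, hE, fun s g hs hg => hE' s g (fun r hr => ?_) hg⟩
    simp only [Finset.mem_filter, Finset.mem_univ, true_and] at hr ⊢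
    rw [mul_pow, hs, hr, one_mul]
end
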